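/- arXiv:1803.07963 — 2 statements merged into one kernel-verified Lean document; each statement's English description precedes it below -/
import Mathlib

section
/- For every integer k ≥ 1, GR_k(C_6) = 2k + 4. -/
/-!
The upper bound is proved in a weighted form. A color of weight two must avoid the six-cycle, a
color of weight one the path on five vertices, and a color of weight zero any two distinct edges;
a Gallai coloring on `S` avoiding all of these has at most `3 + ∑ t i` vertices (`card_le`), which
for all weights equal to two is `2k + 3`.

The proof is by induction on `S`. Let `H` be a proper subset with at least three elements that
every outside vertex sees in a single color. At most `t i` outside vertices see `H` in color `i`,
and each of them lowers the weight of `i` inside `H` by one (`downgrade`), so induction on `H`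
gives the bound. Hence such homogeneous sets may be assumed to have at most two elements. In a
Gallai coloring the components of each color are homogeneous (`Reach.homog`), and at most two
colors are connected (`gallai_two`). So the edges of disconnected colors form a matching of pairs
of twins (`component_edge`), and there must be exactly two connected colors, red and blue, each of
positive weight. This leaves red/blue colorings up to a matching of twins on six, seven or eight
vertices, for the weights `(1, 1)`, `(2, 1)` and `(2, 2)`: these are `two_six`, `two_seven` and
`two_eight`, whose finite case analysis is carried out by explicit case trees (`Cert`) and a
checker proved correct in `check_sound`.

For the lower bound, color an edge by its larger endpoint: the first five vertices form a clique
in color `0`, and each further pair of vertices introduces a new color on all edges going down. A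
six-cycle contains three disjoint edges, which two vertices cannot cover.
-/

/-- A Gallai coloring: an edge coloring of the complete graph on `Fin N` with colors
from `Fin k` containing no rainbow triangle. -/
def IsGallai {N k : ℕ} (c : Sym2 (Fin N) → Fin k) : Prop :=
  ∀ x y z : Fin N, x ≠ y → y ≠ z → x ≠ z →
    c s(x, y) = c s(y, z) ∨ c s(y, z) = c s(x, z) ∨ c s(x, y) = c s(x, z)

/-- The coloring `c` of the complete graph on `Fin N` contains a copy of the graph `H`
all of whose edges have color `i`. -/
def HasMonoCopy {N k V : ℕ} (c : Sym2 (Fin N) → Fin k)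
    (H : SimpleGraph (Fin V)) (i : Fin k) : Prop :=
  ∃ f : Fin V → Fin N, Function.Injective f ∧ ∀ u v, H.Adj u v → c s(f u, f v) = i

/-- Every Gallai k-coloring of the complete graph on `N` vertices contains a
monochromatic copy of `(H i)` in color `i` for some color `i`. -/
def GallaiRamseyProp {k : ℕ} (H : Fin k → Σ V : ℕ, SimpleGraph (Fin V)) (N : ℕ) : Prop :=
  ∀ c : Sym2 (Fin N) → Fin k, IsGallai c → ∃ i : Fin k, HasMonoCopy c (H i).2 i

/-- The matching of size `n`: the graph on `2n` vertices consisting of `n` pairwise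
vertex-disjoint edges. -/
def matchingGraph (n : ℕ) : SimpleGraph (Fin (2 * n)) :=
  SimpleGraph.fromRel (fun u v => (u : ℕ) / 2 = (v : ℕ) / 2)

namespace GallaiC6

/-! ### Paths and cycles as vertex lists -/

/-- The shape of a forbidden subgraph: a path on `len` vertices or, if `closed`, a cycle. -/
structure Shape where
  len : ℕ
  closed : Bool

/-- The path on five vertices. -/
def P5 : Shape := ⟨5, false⟩

/-- The path on six vertices. -/
def P6 : Shape := ⟨6, false⟩

/-- The cycle on six vertices. -/
def C6 : Shape := ⟨6, true⟩

/-- The sequence of vertices whose consecutive pairs are the edges of the path or cycle `l`: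
a cycle returns to its first vertex. -/
def Shape.trail {α : Type*} (sh : Shape) (l : List α) : List α :=
  if sh.closed then l ++ l.take 1 else l

/-- The vertex list `l` spans a copy of `sh` with all edges in the relation `P`. -/
def IsShape {α : Type*} (P : α → α → Prop) (sh : Shape) (l : List α) : Prop :=
  l.length = sh.len ∧ l.Nodup ∧ (sh.trail l).IsChain P

/-! ### Case trees for small two-colorings -/

/-- A case tree refuting a partial red/blue coloring of the pairs of `{0, …, n - 1}`. A pair may
also be neither red nor blue (void). The leaves name a red or a blue forbidden subgraph, or a
void pair `i, j` and a vertex `k` joined to `i` in red and to `j` in blue. Inner nodes split on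
the color of a pair, into red and blue, or into red, blue and void. -/
inductive Cert
  | red (l : List ℕ)
  | blue (l : List ℕ)
  | twin (i j k : ℕ)
  | two (i j : ℕ) (a b : Cert)
  | three (i j : ℕ) (a b c : Cert)

/-- Whether the pair `i, j` belongs to the list `s` of unordered pairs. -/
def edge (s : List (ℕ × ℕ)) (i j : ℕ) : Bool :=
  s.any fun p => (p.1 == i && p.2 == j) || (p.1 == j && p.2 == i)

/-- Whether consecutive entries of the list form pairs in `s`. -/
def chainB (s : List (ℕ × ℕ)) : List ℕ → Bool
  | x :: y :: l => edge s x y && chainB s (y :: l)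
  | _ => true

/-- Whether `l` spans a copy of `sh` inside the graph on `{0, …, n - 1}` with edge list `s`. -/
def leafB (n : ℕ) (sh : Shape) (s : List (ℕ × ℕ)) (l : List ℕ) : Bool :=
  l.length == sh.len && decide l.Nodup && l.all (Nat.blt · n) &&
    chainB s (sh.trail l)

/-- Whether some pair in `m` shares a vertex with the pair `i, j`. -/
def touched (m : List (ℕ × ℕ)) (i j : ℕ) : Bool :=
  m.any fun p => p.1 == i || p.1 == j || p.2 == i || p.2 == j

/-- Validity of a case tree, given the pairs `r`, `b`, `m` already known to be red, blue and void.
If `tw` is false there are no void pairs at all. -/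
def check (n : ℕ) (tw : Bool) (shr shb : Shape) :
    Cert → List (ℕ × ℕ) → List (ℕ × ℕ) → List (ℕ × ℕ) → Bool
  | .red l, r, _, _ => leafB n shr r l
  | .blue l, _, b, _ => leafB n shb b l
  | .twin i j k, r, b, m => edge m i j && edge r i k && edge b j k
  | .two i j s t, r, b, m =>
      Nat.blt i j && Nat.blt j n && (!tw || (touched m i j && !edge m i j)) &&
      check n tw shr shb s ((i, j) :: r) b m && check n tw shr shb t r ((i, j) :: b) m
  | .three i j s t u, r, b, m =>
      Nat.blt i j && Nat.blt j n &&
      check n tw shr shb s ((i, j) :: r) b m && check n tw shr shb t r ((i, j) :: b) m &&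
      check n tw shr shb u r b ((i, j) :: m)

/-- Two-colorings on six vertices contain a monochromatic `P5`. -/
def cert_raw6 : Cert :=
  .two 0 2 (.two 0 3 (.two 2 4 (.two 4 5 (.red [3,0,2,4,5]) (.two 1 4 (.red [1,4,2,0,3]) (.two 1 3
  (.red [1,3,0,2,4]) (.two 0 5 (.two 2 5 (.red [3,0,5,2,4]) (.blue [2,5,4,1,3])) (.blue
  [0,5,4,1,3]))))) (.two 1 5 (.two 2 5 (.red [1,5,2,0,3]) (.two 3 5 (.red [1,5,3,0,2]) (.two 1 3
  (.red [2,0,3,1,5]) (.blue [1,3,5,2,4])))) (.two 3 4 (.two 1 2 (.red [1,2,0,3,4]) (.two 0 4 (.two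
  3 5 (.red [2,0,4,3,5]) (.blue [3,5,1,2,4])) (.blue [0,4,2,1,5]))) (.two 3 5 (.two 1 2 (.red
  [1,2,0,3,5]) (.blue [3,4,2,1,5])) (.blue [1,5,3,4,2]))))) (.two 1 4 (.two 1 5 (.two 0 4 (.red
  [2,0,4,1,5]) (.two 2 4 (.red [0,2,4,1,5]) (.two 2 5 (.red [0,2,5,1,4]) (.blue [3,0,4,2,5]))))
  (.two 3 4 (.two 1 2 (.red [0,2,1,4,3]) (.two 2 3 (.red [0,2,3,4,1]) (.blue [0,3,2,1,5]))) (.two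
  0 5 (.two 4 5 (.red [1,4,5,0,2]) (.blue [0,3,4,5,1])) (.blue [1,5,0,3,4])))) (.two 3 5 (.two 0 5
  (.two 3 4 (.red [2,0,5,3,4]) (.two 1 2 (.red [1,2,0,5,3]) (.blue [0,3,4,1,2]))) (.two 3 4 (.two
  2 5 (.red [0,2,5,3,4]) (.two 2 4 (.red [0,2,4,3,5]) (.blue [3,0,5,2,4]))) (.blue [1,4,3,0,5])))
  (.two 0 4 (.two 4 5 (.two 1 5 (.red [1,5,4,0,2]) (.blue [0,3,5,1,4])) (.blue [0,3,5,4,1]))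
  (.blue [1,4,0,3,5]))))) (.two 0 5 (.two 1 3 (.two 0 3 (.two 1 2 (.red [2,1,3,0,5]) (.two 4 5
  (.red [1,3,0,5,4]) (.two 1 4 (.red [4,1,3,0,5]) (.blue [0,2,1,4,5])))) (.two 1 2 (.two 2 5 (.red
  [0,5,2,1,3]) (.two 4 5 (.two 3 4 (.red [0,5,4,3,1]) (.blue [4,3,0,2,5])) (.blue [3,0,2,5,4])))
  (.two 3 5 (.two 1 4 (.red [0,5,3,1,4]) (.blue [3,0,2,1,4])) (.blue [1,2,0,3,5])))) (.two 2 4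
  (.two 0 4 (.two 2 3 (.red [3,2,4,0,5]) (.two 1 5 (.red [1,5,0,4,2]) (.blue [0,2,3,1,5]))) (.two
  1 2 (.two 1 5 (.red [0,5,1,2,4]) (.two 4 5 (.red [0,5,4,2,1]) (.blue [1,5,4,0,2]))) (.blue
  [3,1,2,0,4]))) (.two 0 1 (.two 3 4 (.two 1 4 (.red [3,4,1,0,5]) (.blue [0,2,4,1,3])) (.blue
  [0,2,4,3,1])) (.blue [3,1,0,2,4])))) (.two 1 5 (.two 4 5 (.two 1 3 (.two 2 3 (.red [2,3,1,5,4])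
  (.two 2 4 (.red [2,4,5,1,3]) (.two 0 3 (.red [0,3,1,5,4]) (.blue [4,2,3,0,5])))) (.two 1 2 (.two
  2 3 (.red [3,2,1,5,4]) (.blue [1,3,2,0,5])) (.blue [3,1,2,0,5]))) (.two 1 4 (.two 3 4 (.two 2 3
  (.red [2,3,4,1,5]) (.blue [3,2,0,5,4])) (.blue [2,0,5,4,3])) (.blue [1,4,5,0,2]))) (.two 2 4
  (.two 2 3 (.two 1 3 (.two 0 1 (.red [0,1,3,2,4]) (.two 4 5 (.red [1,3,2,4,5]) (.blue
  [2,0,1,5,4]))) (.blue [2,0,5,1,3])) (.blue [1,5,0,2,3])) (.blue [1,5,0,2,4]))))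

/-- Two-colorings on seven vertices with the red path `0, …, 4` contain a red `C6` or a blue `P5`. -/
def cert_raw7 : Cert :=
  .two 0 6 (.two 4 6 (.red [0,1,2,3,4,6]) (.two 3 6 (.two 2 4 (.red [0,1,2,4,3,6]) (.two 2 5 (.two
  1 5 (.red [0,1,5,2,3,6]) (.two 5 6 (.two 1 4 (.red [1,2,5,6,3,4]) (.two 3 5 (.red [0,1,2,5,3,6])
  (.blue [2,4,1,5,3]))) (.blue [1,5,6,4,2]))) (.two 1 5 (.two 0 5 (.red [0,5,1,2,3,6]) (.blue
  [0,5,2,4,6])) (.blue [1,5,2,4,6])))) (.two 4 5 (.two 0 5 (.red [0,1,2,3,4,5]) (.two 0 4 (.two 3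
  5 (.red [0,1,2,3,5,4]) (.blue [0,5,3,6,4])) (.blue [3,6,4,0,5]))) (.two 0 5 (.two 2 5 (.two 1 4
  (.red [0,1,4,3,2,5]) (.two 1 3 (.two 1 6 (.red [0,5,2,3,1,6]) (.blue [3,6,1,4,5])) (.blue
  [5,4,1,3,6]))) (.blue [2,5,4,6,3])) (.blue [0,5,4,6,3]))))) (.two 4 5 (.two 0 5 (.red
  [0,1,2,3,4,5]) (.two 1 5 (.two 0 2 (.red [0,1,5,4,3,2]) (.two 3 6 (.two 4 6 (.red [1,2,3,6,4,5])
  (.two 2 6 (.red [1,2,6,3,4,5]) (.blue [4,6,2,0,5]))) (.two 2 5 (.two 0 4 (.red [0,1,5,2,3,4])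
  (.two 0 3 (.red [0,1,2,5,4,3]) (.two 4 6 (.two 1 6 (.red [1,5,2,3,4,6]) (.blue [1,6,3,0,2]))
  (.blue [2,0,3,6,4])))) (.blue [3,6,0,2,5])))) (.two 4 6 (.two 2 6 (.two 0 3 (.red [0,1,2,6,4,3])
  (.two 1 3 (.two 3 5 (.red [1,2,6,4,5,3]) (.blue [1,5,3,0,6])) (.blue [5,1,3,0,6]))) (.blue
  [1,5,0,6,2])) (.blue [1,5,0,6,4])))) (.two 0 4 (.two 4 6 (.two 3 6 (.red [0,1,2,3,6,4]) (.two 0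
  5 (.two 3 5 (.two 1 6 (.red [0,1,6,4,3,5]) (.two 1 5 (.red [0,4,3,2,1,5]) (.blue [0,6,1,5,4])))
  (.blue [0,6,3,5,4])) (.blue [3,6,0,5,4]))) (.two 1 5 (.two 2 5 (.red [0,1,5,2,3,4]) (.blue
  [0,6,4,5,2])) (.blue [0,6,4,5,1]))) (.two 1 6 (.two 3 5 (.two 2 5 (.two 4 6 (.red [1,2,5,3,4,6])
  (.two 0 3 (.two 2 6 (.red [0,1,6,2,5,3]) (.blue [2,6,0,4,5])) (.blue [3,0,6,4,5]))) (.blue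
  [2,5,4,0,6])) (.blue [3,5,4,0,6])) (.blue [1,6,0,4,5]))))

/-- Two-colorings on eight vertices with the red path `0, …, 4` contain a monochromatic `P6`. -/
def cert_raw8a : Cert :=
  .two 0 5 (.red [4,3,2,1,0,5]) (.two 4 6 (.red [0,1,2,3,4,6]) (.two 0 7 (.red [4,3,2,1,0,7])
  (.two 4 5 (.red [0,1,2,3,4,5]) (.two 1 7 (.two 2 7 (.red [0,1,7,2,3,4]) (.blue [2,7,0,5,4,6]))
  (.blue [1,7,0,5,4,6])))))

/-- Two-colorings on eight vertices with the red path `0, …, 5` contain a monochromatic `C6`. -/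
def cert_raw8b : Cert :=
  .two 0 5 (.red [0,1,2,3,4,5]) (.two 0 4 (.two 3 5 (.red [0,1,2,3,5,4]) (.two 3 6 (.two 4 6 (.red
  [0,1,2,3,6,4]) (.two 2 6 (.red [0,1,2,6,3,4]) (.two 2 5 (.two 1 5 (.red [0,1,5,2,3,4]) (.two 1 3
  (.red [0,1,3,2,5,4]) (.two 0 6 (.red [0,4,5,2,3,6]) (.two 0 3 (.red [0,1,2,5,4,3]) (.two 1 4
  (.two 5 6 (.red [1,2,5,6,3,4]) (.two 1 6 (.red [1,4,5,2,3,6]) (.two 0 2 (.two 3 7 (.two 4 7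
  (.red [0,1,2,3,7,4]) (.two 1 7 (.red [0,2,3,7,1,4]) (.blue [0,3,1,7,4,6]))) (.two 0 7 (.two 5 7
  (.red [0,4,1,2,5,7]) (.blue [0,5,7,3,1,6])) (.blue [0,6,1,5,3,7]))) (.blue [0,2,6,1,3,5]))))
  (.blue [0,5,3,1,4,6])))))) (.two 4 7 (.two 3 7 (.red [0,1,2,3,7,4]) (.two 0 7 (.red
  [0,1,2,3,4,7]) (.two 0 6 (.two 2 7 (.red [0,4,7,2,3,6]) (.two 2 4 (.red [0,1,2,4,3,6]) (.two 5 6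
  (.two 1 4 (.red [0,4,1,2,3,6]) (.two 1 5 (.red [0,1,5,4,3,6]) (.blue [0,5,1,4,2,7]))) (.blue
  [0,5,6,4,2,7])))) (.blue [0,6,2,5,3,7])))) (.two 0 7 (.two 6 7 (.red [0,1,2,3,6,7]) (.two 3 7
  (.two 5 6 (.red [0,4,5,6,3,7]) (.two 1 7 (.red [0,4,3,2,1,7]) (.two 1 5 (.red [0,1,5,4,3,7])
  (.blue [1,5,2,6,4,7])))) (.blue [2,5,3,7,4,6]))) (.blue [0,5,2,6,4,7])))))) (.two 0 7 (.two 4 7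
  (.red [0,1,2,3,4,7]) (.two 1 7 (.red [0,4,3,2,1,7]) (.two 3 7 (.two 2 4 (.red [0,1,2,4,3,7])
  (.two 1 5 (.red [0,1,5,4,3,7]) (.two 0 2 (.two 4 6 (.two 6 7 (.red [0,2,3,4,6,7]) (.two 1 4
  (.red [0,4,1,2,3,7]) (.blue [1,4,7,6,3,5]))) (.blue [1,5,3,6,4,7])) (.blue [0,2,4,7,1,5]))))
  (.two 1 5 (.two 2 5 (.red [0,1,5,2,3,4]) (.two 2 7 (.red [0,4,5,1,2,7]) (.two 0 6 (.two 1 6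
  (.red [0,4,3,2,1,6]) (.blue [1,6,3,5,2,7])) (.blue [0,5,2,7,3,6])))) (.two 0 6 (.two 4 6 (.red
  [0,1,2,3,4,6]) (.blue [1,5,3,6,4,7])) (.blue [0,5,1,7,3,6])))))) (.two 1 6 (.two 0 6 (.red
  [0,4,3,2,1,6]) (.two 5 6 (.red [1,2,3,4,5,6]) (.two 2 6 (.red [0,1,6,2,3,4]) (.two 2 7 (.two 3 7
  (.red [0,1,2,7,3,4]) (.two 2 5 (.two 0 3 (.red [0,1,2,5,4,3]) (.two 1 3 (.red [0,1,3,2,5,4])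
  (.two 1 5 (.red [0,1,5,2,3,4]) (.blue [0,6,5,1,3,7])))) (.blue [0,6,2,5,3,7]))) (.blue
  [0,5,3,6,2,7]))))) (.two 1 7 (.two 2 7 (.red [0,1,7,2,3,4]) (.two 2 6 (.two 5 7 (.red
  [1,2,3,4,5,7]) (.two 5 6 (.red [0,1,2,6,5,4]) (.two 0 6 (.two 1 3 (.red [0,4,3,1,2,6]) (.two 3 7
  (.red [0,1,7,3,2,6]) (.blue [0,5,6,1,3,7]))) (.two 2 5 (.two 1 3 (.red [0,1,3,2,5,4]) (.blue
  [0,6,1,3,5,7])) (.blue [0,6,3,5,2,7]))))) (.blue [0,5,3,6,2,7]))) (.blue [0,5,3,6,1,7]))))))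
  (.two 4 7 (.two 0 7 (.red [0,1,2,3,4,7]) (.two 1 7 (.two 0 2 (.red [0,1,7,4,3,2]) (.two 5 7
  (.red [1,2,3,4,5,7]) (.two 3 5 (.red [1,2,3,5,4,7]) (.two 3 6 (.two 0 6 (.red [0,1,7,4,3,6])
  (.two 2 6 (.red [1,2,6,3,4,7]) (.two 4 6 (.red [1,2,3,6,4,7]) (.two 2 5 (.two 3 7 (.red
  [1,2,5,4,3,7]) (.two 6 7 (.red [2,3,6,7,4,5]) (.blue [0,2,6,7,3,5]))) (.blue [0,4,6,2,5,7])))))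
  (.two 4 6 (.two 2 6 (.two 0 3 (.red [0,1,2,6,4,3]) (.two 3 7 (.red [1,2,6,4,3,7]) (.two 5 6
  (.red [1,2,6,5,4,7]) (.two 0 6 (.red [0,1,2,3,4,6]) (.two 1 6 (.red [1,6,2,3,4,7]) (.two 1 3
  (.red [1,3,2,6,4,7]) (.blue [0,5,6,1,3,7]))))))) (.blue [0,2,6,3,5,7])) (.blue
  [0,4,6,3,5,7])))))) (.two 1 5 (.two 5 7 (.red [1,2,3,4,7,5]) (.two 3 7 (.red [1,2,3,7,4,5])
  (.two 0 2 (.red [0,1,5,4,3,2]) (.two 4 6 (.two 0 6 (.red [0,1,2,3,4,6]) (.two 3 6 (.red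
  [1,2,3,6,4,5]) (.two 1 3 (.two 2 6 (.red [1,3,2,6,4,5]) (.blue [0,2,6,3,7,5])) (.blue
  [0,5,7,1,3,6])))) (.two 3 6 (.two 1 6 (.two 5 6 (.red [1,2,3,4,5,6]) (.two 2 4 (.red
  [1,5,4,2,3,6]) (.blue [0,2,4,6,5,7]))) (.blue [0,4,6,1,7,5])) (.blue [0,4,6,3,7,5])))))) (.two 1
  6 (.two 6 7 (.red [1,2,3,4,7,6]) (.two 4 6 (.two 3 7 (.red [1,2,3,7,4,6]) (.two 3 5 (.red
  [1,2,3,5,4,6]) (.two 0 2 (.red [0,1,6,4,3,2]) (.two 0 6 (.red [0,1,2,3,4,6]) (.two 0 3 (.two 2 5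
  (.red [0,1,2,5,4,3]) (.blue [0,2,5,1,7,6])) (.blue [0,3,5,1,7,6])))))) (.blue [0,4,6,7,1,5])))
  (.two 2 6 (.two 4 6 (.two 0 3 (.red [0,1,2,6,4,3]) (.two 0 6 (.red [0,1,2,3,4,6]) (.two 3 5
  (.two 6 7 (.red [2,3,5,4,7,6]) (.two 3 6 (.two 3 7 (.two 5 6 (.red [2,3,7,4,5,6]) (.two 1 3
  (.red [1,2,6,4,5,3]) (.blue [0,3,1,5,6,7]))) (.blue [0,3,7,6,1,5])) (.blue [0,3,6,7,1,5])))
  (.two 5 7 (.two 6 7 (.red [2,3,4,5,7,6]) (.blue [0,3,5,1,6,7])) (.blue [0,3,5,7,1,6]))))) (.two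
  5 7 (.two 6 7 (.red [2,3,4,5,7,6]) (.blue [0,4,6,7,1,5])) (.blue [0,4,6,1,5,7]))) (.two 2 4
  (.two 2 5 (.two 0 3 (.red [0,1,2,5,4,3]) (.two 2 7 (.two 3 6 (.two 6 7 (.red [2,5,4,3,6,7])
  (.two 3 7 (.two 4 6 (.red [2,5,4,6,3,7]) (.blue [0,4,6,7,1,5])) (.blue [0,3,7,6,1,5]))) (.two 6
  7 (.two 5 6 (.red [2,3,4,5,6,7]) (.blue [0,3,6,5,1,7])) (.blue [0,3,6,7,1,5]))) (.blue
  [0,5,1,6,2,7]))) (.blue [0,5,2,6,1,7])) (.blue [0,4,2,6,1,5]))))))) (.two 1 7 (.two 5 7 (.red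
  [1,2,3,4,5,7]) (.two 3 7 (.two 2 5 (.red [1,2,5,4,3,7]) (.two 0 6 (.two 4 6 (.red [0,1,2,3,4,6])
  (.two 2 6 (.red [0,1,7,3,2,6]) (.two 6 7 (.red [0,1,2,3,7,6]) (.blue [0,4,7,6,2,5])))) (.two 2 6
  (.two 4 6 (.red [1,2,6,4,3,7]) (.two 2 7 (.two 0 2 (.two 3 6 (.red [0,1,7,3,6,2]) (.two 1 4
  (.red [0,1,4,3,7,2]) (.two 1 5 (.red [0,1,5,4,3,2]) (.two 1 3 (.two 6 7 (.red [0,1,3,7,6,2])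
  (.blue [0,5,1,4,7,6])) (.blue [0,4,6,3,1,5]))))) (.blue [0,2,5,7,4,6])) (.blue [0,5,2,7,4,6])))
  (.blue [0,4,7,5,2,6])))) (.two 5 6 (.two 1 6 (.red [1,2,3,4,5,6]) (.two 0 6 (.two 2 4 (.red
  [0,1,2,4,5,6]) (.two 0 2 (.red [0,2,3,4,5,6]) (.two 3 5 (.red [0,1,2,3,5,6]) (.blue
  [0,2,4,7,3,5])))) (.two 1 4 (.two 3 6 (.red [1,2,3,6,5,4]) (.two 1 5 (.two 4 6 (.red
  [1,2,3,4,6,5]) (.blue [0,4,6,3,7,5])) (.blue [0,4,7,5,1,6]))) (.blue [0,5,7,4,1,6])))) (.two 3 6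
  (.two 4 6 (.two 1 5 (.red [1,2,3,6,4,5]) (.two 0 6 (.red [0,1,2,3,4,6]) (.two 1 6 (.two 3 5
  (.red [1,2,3,5,4,6]) (.blue [0,4,7,3,5,6])) (.blue [0,4,7,5,1,6])))) (.two 0 3 (.two 2 5 (.red
  [0,1,2,5,4,3]) (.two 0 7 (.two 1 5 (.red [0,3,4,5,1,7]) (.two 2 6 (.red [0,3,6,2,1,7]) (.two 0 6
  (.red [0,6,3,2,1,7]) (.blue [0,4,7,5,2,6])))) (.two 2 6 (.two 2 7 (.red [0,1,7,2,6,3]) (.blue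
  [0,4,6,5,2,7])) (.blue [0,5,2,6,4,7])))) (.blue [0,3,7,4,6,5]))) (.blue [0,4,7,3,6,5]))))) (.two
  1 5 (.two 0 2 (.red [0,1,5,4,3,2]) (.two 5 6 (.two 1 6 (.red [1,2,3,4,5,6]) (.two 4 6 (.red
  [1,2,3,4,6,5]) (.two 2 7 (.two 2 6 (.two 3 6 (.red [1,2,6,3,4,5]) (.two 0 3 (.red [0,1,5,6,2,3])
  (.blue [0,3,6,1,7,4]))) (.blue [0,2,6,1,7,4])) (.blue [0,2,7,1,6,4])))) (.two 1 6 (.two 2 6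
  (.red [1,5,4,3,2,6]) (.two 5 7 (.two 2 7 (.two 0 3 (.red [0,1,5,7,2,3]) (.two 3 7 (.red
  [1,2,7,3,4,5]) (.two 4 6 (.red [1,2,7,5,4,6]) (.blue [0,2,6,4,7,3])))) (.blue [0,4,7,2,6,5]))
  (.blue [0,2,6,5,7,4]))) (.blue [0,4,7,1,6,5])))) (.two 5 6 (.two 1 6 (.red [1,2,3,4,5,6]) (.two
  6 7 (.two 2 7 (.red [2,3,4,5,6,7]) (.two 2 4 (.two 3 7 (.red [2,3,7,6,5,4]) (.two 0 6 (.red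
  [0,1,2,4,5,6]) (.two 2 6 (.two 5 7 (.red [2,3,4,5,7,6]) (.blue [0,4,7,5,1,6])) (.blue
  [0,5,1,7,2,6])))) (.blue [0,4,2,7,1,5]))) (.blue [0,4,7,6,1,5]))) (.two 1 6 (.two 0 6 (.two 4 6
  (.red [0,1,2,3,4,6]) (.two 0 7 (.two 6 7 (.two 3 7 (.red [0,6,1,2,3,7]) (.two 3 6 (.red
  [0,1,2,3,6,7]) (.blue [0,4,7,3,6,5]))) (.blue [0,4,6,7,1,5])) (.blue [0,4,6,5,1,7]))) (.blue
  [0,4,7,1,5,6])) (.blue [0,4,7,1,6,5])))))))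

/-- Void pair `0, 1` with common red neighbors `2, 3` and blue ones `4, 5`: a monochromatic `P5`. -/
def cert_twin6 : Cert :=
  .three 2 4 (.red [0,3,1,2,4]) (.blue [0,5,1,4,2]) (.twin 2 4 0)

/-- Void pair `0, 1` with common red neighbors `2, 3, 4` and blue ones `5, 6`: a red `C6` or a
blue `P5`. -/
def cert_twin7_3 : Cert :=
  .three 2 5 (.three 3 5 (.red [0,2,5,3,1,4]) (.blue [0,6,1,5,3]) (.twin 3 5 0)) (.blue
  [0,6,1,5,2]) (.twin 2 5 0)

/-- Void pair `0, 1` with common red neighbors `2, …, 5` and blue one `6`: a red `C6` or a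
blue `P5`. -/
def cert_twin7_4 : Cert :=
  .three 3 4 (.three 2 4 (.red [0,2,4,3,1,5]) (.three 2 3 (.red [0,2,3,4,1,5]) (.three 3 6 (.three
  4 6 (.red [0,2,1,3,6,4]) (.blue [0,6,4,2,3]) (.twin 4 6 0)) (.blue [0,6,3,2,4]) (.twin 3 6 0))
  (.twin 3 2 4)) (.two 2 5 (.red [0,2,5,1,3,4]) (.two 2 3 (.red [0,2,3,4,1,5]) (.twin 4 2 3))))
  (.three 2 6 (.three 3 6 (.red [0,2,6,3,1,4]) (.three 4 6 (.red [0,2,6,4,1,3]) (.three 2 4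
  (.three 3 5 (.red [0,2,4,1,3,5]) (.blue [0,6,4,3,5]) (.two 4 5 (.red [0,2,4,5,1,3]) (.blue
  [0,6,3,4,5]))) (.blue [0,6,3,4,2]) (.twin 2 4 6)) (.twin 4 6 0)) (.twin 3 6 0)) (.three 2 3
  (.three 2 4 (.red [0,3,2,4,1,5]) (.blue [0,6,2,4,3]) (.twin 2 4 3)) (.blue [0,6,2,3,4]) (.two 2
  4 (.twin 2 3 4) (.blue [0,6,2,4,3]))) (.twin 2 6 0)) (.two 2 3 (.two 2 4 (.red [0,3,2,4,1,5])
  (.twin 3 4 2)) (.two 2 4 (.twin 4 3 2) (.two 4 6 (.two 3 6 (.red [0,2,1,3,6,4]) (.blue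
  [0,6,3,2,4])) (.blue [0,6,4,2,3]))))

/-- Void pair `0, 1` with common red neighbors `2, 3, 4` and blue ones `5, 6, 7`: a monochromatic
`C6`. -/
def cert_twin8_3 : Cert :=
  .three 2 5 (.three 3 5 (.red [0,2,5,3,1,4]) (.three 3 6 (.three 4 6 (.red [0,2,1,3,6,4]) (.three
  4 5 (.red [0,2,5,4,1,3]) (.blue [0,5,4,6,1,7]) (.twin 4 5 0)) (.twin 4 6 0)) (.blue
  [0,5,3,6,1,7]) (.twin 3 6 0)) (.twin 3 5 0)) (.three 2 6 (.three 3 6 (.red [0,2,6,3,1,4])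
  (.three 3 7 (.three 2 7 (.red [0,2,7,3,1,4]) (.blue [0,5,2,7,1,6]) (.twin 2 7 0)) (.blue
  [0,5,1,6,3,7]) (.twin 3 7 0)) (.twin 3 6 0)) (.blue [0,5,2,6,1,7]) (.twin 2 6 0)) (.twin 2 5 0)

/-- Void pair `0, 1` with common red neighbors `2, …, 5` and blue ones `6, 7`: a monochromatic
`C6`. -/
def cert_twin8_4 : Cert :=
  .three 2 3 (.three 3 5 (.red [0,2,3,5,1,4]) (.three 3 4 (.red [0,2,3,4,1,5]) (.three 4 6 (.three
  3 6 (.red [0,2,1,3,6,4]) (.three 2 4 (.red [0,3,2,4,1,5]) (.three 2 6 (.red [0,2,6,4,1,3])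
  (.three 3 7 (.three 2 7 (.red [0,2,7,3,1,4]) (.blue [0,6,3,4,2,7]) (.twin 2 7 0)) (.blue
  [0,6,2,4,3,7]) (.twin 3 7 0)) (.twin 2 6 0)) (.twin 2 4 3)) (.twin 3 6 0)) (.three 5 7 (.three 3
  7 (.red [0,2,1,3,7,5]) (.three 4 5 (.red [0,2,3,1,4,5]) (.blue [0,6,4,5,3,7]) (.two 2 5 (.red
  [0,3,2,5,1,4]) (.two 4 7 (.red [0,2,1,4,7,5]) (.twin 5 4 7)))) (.twin 3 7 0)) (.blue
  [0,6,4,3,5,7]) (.twin 5 7 0)) (.twin 4 6 0)) (.two 2 4 (.red [0,3,2,4,1,5]) (.twin 3 4 2)))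
  (.two 4 5 (.red [0,2,3,1,4,5]) (.two 2 5 (.red [0,3,2,5,1,4]) (.twin 3 5 2)))) (.three 2 7
  (.three 4 7 (.red [0,2,7,4,1,3]) (.three 5 7 (.red [0,2,7,5,1,3]) (.three 3 6 (.three 2 6 (.red
  [0,2,6,3,1,4]) (.three 3 4 (.three 3 5 (.red [0,2,1,4,3,5]) (.blue [0,6,2,3,5,7]) (.two 5 6
  (.red [0,2,1,3,6,5]) (.twin 3 5 6))) (.blue [0,6,2,3,4,7]) (.two 4 6 (.red [0,2,1,3,6,4]) (.twin
  3 4 6))) (.twin 2 6 0)) (.three 2 5 (.three 2 4 (.red [0,3,1,4,2,5]) (.blue [0,6,3,2,4,7])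
  (.twin 2 4 7)) (.blue [0,6,3,2,5,7]) (.twin 2 5 7)) (.twin 3 6 0)) (.twin 5 7 0)) (.twin 4 7 0))
  (.three 5 6 (.three 4 6 (.red [0,2,1,4,6,5]) (.three 3 4 (.three 4 5 (.red [0,2,1,3,4,5])
  (.three 2 5 (.red [0,2,5,1,3,4]) (.blue [0,6,4,5,2,7]) (.two 2 6 (.red [0,2,6,5,1,3]) (.twin 5 2
  6))) (.twin 5 4 6)) (.blue [0,6,4,3,2,7]) (.two 3 6 (.red [0,2,1,3,6,5]) (.two 2 4 (.twin 4 3 2)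
  (.two 4 7 (.two 3 7 (.red [0,2,1,3,7,4]) (.blue [0,6,4,2,3,7])) (.blue [0,6,3,2,4,7]))))) (.twin
  4 6 0)) (.three 3 5 (.three 2 5 (.red [0,2,5,3,1,4]) (.three 2 4 (.red [0,2,4,1,3,5]) (.three 4
  5 (.red [0,2,1,3,5,4]) (.blue [0,6,5,4,2,7]) (.two 3 4 (.red [0,2,1,4,3,5]) (.twin 5 4 3)))
  (.two 3 4 (.red [0,2,1,4,3,5]) (.two 4 6 (.two 2 6 (.red [0,2,6,4,1,3]) (.twin 4 2 6)) (.blue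
  [0,6,4,3,2,7])))) (.twin 5 2 3)) (.blue [0,6,5,3,2,7]) (.two 2 5 (.twin 5 3 2) (.two 3 7 (.two 5
  7 (.red [0,2,1,3,7,5]) (.twin 3 5 7)) (.blue [0,6,5,2,3,7])))) (.twin 5 6 0)) (.twin 2 7 0))
  (.two 3 7 (.two 2 7 (.red [0,2,7,3,1,4]) (.twin 3 2 7)) (.two 2 7 (.twin 2 3 7) (.two 3 4 (.two
  2 4 (.red [0,2,4,3,1,5]) (.twin 3 2 4)) (.two 2 4 (.twin 2 3 4) (.two 3 6 (.two 2 6 (.red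
  [0,2,6,3,1,4]) (.blue [0,6,2,4,3,7])) (.blue [0,6,3,4,2,7]))))))

/-- Void pair `0, 1` with common red neighbors `2, …, 6` and blue one `7`: a monochromatic `C6`. -/
def cert_twin8_5 : Cert :=
  .three 2 5 (.three 2 6 (.red [0,3,1,5,2,6]) (.three 2 4 (.red [0,3,1,4,2,5]) (.three 3 5 (.red
  [0,2,5,3,1,4]) (.three 5 6 (.red [0,2,5,6,1,3]) (.three 3 7 (.three 2 7 (.red [0,2,7,3,1,4])
  (.three 4 7 (.red [0,2,1,3,7,4]) (.three 3 4 (.red [0,2,5,1,3,4]) (.blue [2,6,5,3,4,7]) (.twin 3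
  4 7)) (.twin 4 7 0)) (.twin 2 7 0)) (.three 4 7 (.three 2 7 (.red [0,2,7,4,1,3]) (.three 4 6
  (.red [0,2,5,1,4,6]) (.blue [2,4,6,5,3,7]) (.two 6 7 (.red [0,2,1,4,7,6]) (.twin 4 6 7))) (.twin
  2 7 0)) (.blue [2,4,7,3,5,6]) (.twin 4 7 0)) (.twin 3 7 0)) (.twin 5 6 2)) (.two 5 6 (.red
  [0,2,5,6,1,3]) (.two 3 4 (.red [0,2,5,1,3,4]) (.two 4 5 (.red [0,2,5,4,1,3]) (.two 2 3 (.red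
  [0,3,2,5,1,4]) (.twin 5 3 2)))))) (.two 3 4 (.red [0,2,5,1,3,4]) (.two 4 5 (.red [0,2,5,4,1,3])
  (.twin 2 4 5)))) (.two 2 4 (.red [0,3,1,4,2,5]) (.two 5 6 (.red [0,2,5,6,1,3]) (.twin 2 6 5))))
  (.three 4 7 (.three 3 7 (.red [0,2,1,3,7,4]) (.three 6 7 (.red [0,2,1,4,7,6]) (.three 5 7 (.red
  [0,2,1,4,7,5]) (.three 3 4 (.three 4 5 (.red [0,2,1,3,4,5]) (.three 4 6 (.red [0,2,1,3,4,6])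
  (.three 2 3 (.red [0,2,3,4,1,5]) (.blue [2,3,7,6,4,5]) (.two 2 4 (.red [0,2,4,3,1,5]) (.twin 3 2
  4))) (.twin 4 6 7)) (.twin 4 5 7)) (.three 4 6 (.three 2 4 (.red [0,2,4,6,1,3]) (.three 3 6
  (.red [0,2,1,3,6,4]) (.blue [2,4,3,6,7,5]) (.twin 6 3 4)) (.two 2 7 (.red [0,2,7,4,1,3]) (.twin
  4 2 7))) (.three 2 3 (.three 2 6 (.red [0,3,2,6,1,4]) (.blue [2,5,7,3,4,6]) (.two 3 6 (.red
  [0,2,3,6,1,4]) (.twin 2 6 3))) (.blue [2,3,4,6,7,5]) (.two 2 6 (.two 3 5 (.red [0,2,6,1,3,5])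
  (.two 2 4 (.red [0,3,1,4,2,6]) (.blue [2,4,6,7,3,5]))) (.blue [2,5,7,3,4,6]))) (.twin 4 6 7))
  (.twin 4 3 7)) (.twin 5 7 0)) (.twin 6 7 0)) (.twin 3 7 0)) (.three 3 6 (.three 5 6 (.red
  [0,2,1,3,6,5]) (.three 2 3 (.red [0,2,3,6,1,4]) (.three 3 4 (.red [0,2,1,4,3,6]) (.three 6 7
  (.three 5 7 (.red [0,2,1,5,7,6]) (.three 2 6 (.red [0,2,6,3,1,4]) (.blue [2,3,4,7,5,6]) (.twin 6
  2 3)) (.twin 5 7 0)) (.blue [2,3,4,7,6,5]) (.twin 6 7 0)) (.two 4 5 (.red [0,3,6,1,4,5]) (.two 2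
  4 (.red [0,2,4,1,3,6]) (.two 3 5 (.red [0,2,1,5,3,6]) (.two 4 6 (.red [0,2,1,3,6,4]) (.twin 3 4
  6)))))) (.two 2 6 (.red [0,2,6,3,1,4]) (.twin 3 2 6))) (.two 2 6 (.red [0,2,6,3,1,4]) (.two 4 6
  (.red [0,2,1,3,6,4]) (.two 3 5 (.red [0,2,1,5,3,6]) (.twin 6 5 3))))) (.three 5 7 (.three 6 7
  (.red [0,2,1,5,7,6]) (.three 4 5 (.three 2 4 (.red [0,2,4,5,1,3]) (.three 3 5 (.red
  [0,2,1,3,5,4]) (.blue [2,4,7,6,3,5]) (.two 3 4 (.red [0,2,1,3,4,5]) (.twin 5 3 4))) (.twin 4 2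
  5)) (.three 2 7 (.red [0,2,7,5,1,3]) (.three 2 3 (.three 3 4 (.red [0,2,3,4,1,5]) (.blue
  [2,5,4,3,6,7]) (.two 3 5 (.red [0,2,3,5,1,4]) (.two 4 6 (.red [0,2,3,1,4,6]) (.blue
  [2,5,3,6,4,7])))) (.blue [2,3,6,7,4,5]) (.two 3 4 (.two 3 7 (.red [0,2,1,3,7,5]) (.two 2 6 (.red
  [0,2,6,1,3,4]) (.blue [2,5,4,7,3,6]))) (.blue [2,5,4,3,6,7]))) (.twin 2 7 0)) (.twin 5 4 7))
  (.twin 6 7 0)) (.three 4 6 (.three 2 6 (.red [0,2,6,4,1,3]) (.three 3 4 (.red [0,2,1,3,4,6])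
  (.blue [2,5,7,4,3,6]) (.twin 4 3 6)) (.two 2 4 (.red [0,2,4,6,1,3]) (.twin 6 2 4))) (.three 2 3
  (.three 3 5 (.red [0,2,3,5,1,4]) (.three 2 4 (.red [0,3,2,4,1,5]) (.three 2 6 (.red
  [0,3,2,6,1,4]) (.blue [2,4,7,5,3,6]) (.twin 2 6 3)) (.two 3 4 (.red [0,2,3,4,1,5]) (.twin 2 4
  3))) (.twin 3 5 2)) (.blue [2,3,6,4,7,5]) (.two 2 6 (.twin 2 3 6) (.two 3 4 (.two 2 4 (.red
  [0,2,4,3,1,5]) (.twin 3 2 4)) (.blue [2,5,7,4,3,6])))) (.two 3 4 (.twin 4 6 3) (.two 2 6 (.two 5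
  6 (.red [0,2,6,5,1,3]) (.two 2 4 (.red [0,3,1,4,2,6]) (.twin 6 4 2))) (.blue [2,5,7,4,3,6]))))
  (.twin 5 7 0)) (.two 3 5 (.two 5 6 (.red [0,2,1,3,5,6]) (.twin 3 6 5)) (.two 5 6 (.twin 6 3 5)
  (.two 6 7 (.two 3 7 (.red [0,2,1,3,7,6]) (.twin 6 3 7)) (.two 3 7 (.twin 3 6 7) (.two 2 3 (.two
  4 6 (.red [0,2,3,1,4,6]) (.two 2 6 (.red [0,3,2,6,1,4]) (.blue [2,5,3,7,4,6]))) (.two 4 6 (.two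
  3 4 (.red [0,2,1,3,4,6]) (.blue [2,3,4,7,6,5])) (.blue [2,3,7,4,6,5])))))))) (.twin 4 7 0))
  (.two 4 5 (.two 2 3 (.red [0,2,3,1,4,5]) (.two 2 4 (.red [0,2,4,5,1,3]) (.twin 5 2 4))) (.two 2
  4 (.twin 2 5 4) (.two 5 7 (.two 2 7 (.red [0,2,7,5,1,3]) (.twin 5 2 7)) (.two 2 7 (.twin 2 5 7)
  (.two 5 6 (.two 2 6 (.red [0,2,6,5,1,3]) (.twin 5 2 6)) (.two 2 6 (.twin 2 5 6) (.two 2 3 (.two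
  3 5 (.red [0,2,3,5,1,4]) (.twin 2 5 3)) (.two 3 5 (.twin 5 2 3) (.three 3 7 (.three 6 7 (.red
  [0,2,1,3,7,6]) (.three 4 7 (.red [0,2,1,3,7,4]) (.blue [2,3,5,4,7,6]) (.twin 4 7 0)) (.twin 6 7
  0)) (.three 4 7 (.three 6 7 (.red [0,2,1,4,7,6]) (.blue [2,4,5,3,7,6]) (.twin 6 7 0)) (.blue
  [2,4,7,3,5,6]) (.twin 4 7 0)) (.twin 3 7 0))))))))))

lemma edge_sound {P : ℕ → ℕ → Prop} (hs : ∀ i j, P i j → P j i) {s : List (ℕ × ℕ)}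
    (h : ∀ p ∈ s, P p.1 p.2) {i j : ℕ} (he : edge s i j = true) : P i j := by
  simp only [edge, List.any_eq_true, Bool.or_eq_true, Bool.and_eq_true, beq_iff_eq] at he
  obtain ⟨p, hp, ⟨h1, h2⟩ | ⟨h1, h2⟩⟩ := he
  · subst h1 h2; exact h p hp
  · subst h1 h2; exact hs _ _ (h p hp)

lemma chain_sound {P : ℕ → ℕ → Prop} (hs : ∀ i j, P i j → P j i) {s : List (ℕ × ℕ)}
    (h : ∀ p ∈ s, P p.1 p.2) : ∀ l : List ℕ, chainB s l = true → l.IsChain P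
  | [], _ => by simp
  | [_], _ => by simp
  | x :: y :: l, hc => by
      simp only [chainB, Bool.and_eq_true] at hc
      exact List.isChain_cons_cons.2 ⟨edge_sound hs h hc.1, chain_sound hs h _ hc.2⟩

lemma leaf_sound {P : ℕ → ℕ → Prop} (hs : ∀ i j, P i j → P j i) {s : List (ℕ × ℕ)}
    (h : ∀ p ∈ s, P p.1 p.2) {n : ℕ} {sh : Shape} {l : List ℕ}
    (hl : leafB n sh s l = true) : (∀ x ∈ l, x < n) ∧ IsShape P sh l := by
  simp only [leafB, Bool.and_eq_true, beq_iff_eq, decide_eq_true_eq, List.all_eq_true,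
    Nat.blt_eq] at hl
  exact ⟨hl.1.2, hl.1.1.1, hl.1.1.2, chain_sound hs h _ hl.2⟩

/-- Void pairs form a matching, and the two vertices of a void pair see every third vertex in the
same way; under these rules a valid case tree produces one of the two forbidden subgraphs. -/
lemma check_sound {n : ℕ} {tw : Bool} {shr shb : Shape} {R B M : ℕ → ℕ → Prop}
    (hR : ∀ i j, R i j → R j i) (hB : ∀ i j, B i j → B j i) (hM : ∀ i j, M i j → M j i)
    (tri : ∀ i j, i < j → j < n → R i j ∨ B i j ∨ M i j)
    (raw : tw = false → ∀ i j, ¬ M i j)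
    (hm : ∀ i j k, M i j → M i k → j = k)
    (htw : ∀ i j k, M i j → R i k → B j k → False) :
    ∀ (t : Cert) (r b m : List (ℕ × ℕ)), check n tw shr shb t r b m = true →
      (∀ p ∈ r, R p.1 p.2) → (∀ p ∈ b, B p.1 p.2) → (∀ p ∈ m, M p.1 p.2) →
      (∃ l, (∀ x ∈ l, x < n) ∧ IsShape R shr l) ∨
        (∃ l, (∀ x ∈ l, x < n) ∧ IsShape B shb l) := by
  have cons {P : ℕ → ℕ → Prop} {i j : ℕ} {s : List (ℕ × ℕ)} (h : P i j)
      (hs : ∀ p ∈ s, P p.1 p.2) : ∀ p ∈ (i, j) :: s, P p.1 p.2 := by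
    intro p hp
    rcases List.mem_cons.1 hp with rfl | hp
    exacts [h, hs p hp]
  intro t
  induction t with
  | red l => intro r b m h hr _ _; exact .inl ⟨l, leaf_sound hR hr h⟩
  | blue l => intro r b m h _ hb _; exact .inr ⟨l, leaf_sound hB hb h⟩
  | twin i j k =>
      intro r b m h hr hb hmm
      simp only [check, Bool.and_eq_true] at h
      exact (htw i j k (edge_sound hM hmm h.1.1) (edge_sound hR hr h.1.2)
        (edge_sound hB hb h.2)).elim
  | two i j s t ihs iht =>
      intro r b m h hr hb hmm
      simp only [check, Bool.and_eq_true, Bool.or_eq_true, Nat.blt_eq, Bool.not_eq_true'] at h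
      obtain ⟨⟨⟨⟨hij, hjn⟩, htt⟩, hs⟩, ht⟩ := h
      rcases tri i j hij hjn with h | h | h
      · exact ihs _ _ _ hs (cons h hr) hb hmm
      · exact iht _ _ _ ht hr (cons h hb) hmm
      -- A void pair cannot meet another void pair.
      · exfalso
        rcases htt with h0 | htt
        · exact raw h0 _ _ h
        · simp only [touched, List.any_eq_true, Bool.or_eq_true, beq_iff_eq] at htt
          obtain ⟨⟨p, hp, hpt⟩, hne⟩ := htt
          have hp' := hmm p hp
          have key : (p.1 = i ∧ p.2 = j) ∨ (p.1 = j ∧ p.2 = i) := by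
            rcases hpt with ((e | e) | e) | e
            · subst e; exact .inl ⟨rfl, hm _ _ _ hp' h⟩
            · subst e; exact .inr ⟨rfl, hm _ _ _ hp' (hM _ _ h)⟩
            · subst e; exact .inr ⟨hm _ _ _ (hM _ _ hp') h, rfl⟩
            · subst e; exact .inl ⟨hm _ _ _ (hM _ _ hp') (hM _ _ h), rfl⟩
          refine absurd ?_ (Bool.eq_false_iff.1 hne)
          simp only [edge, List.any_eq_true, Bool.or_eq_true, Bool.and_eq_true, beq_iff_eq]
          exact ⟨p, hp, key⟩
  | three i j s t u ihs iht ihu =>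
      intro r b m h hr hb hmm
      simp only [check, Bool.and_eq_true, Nat.blt_eq] at h
      obtain ⟨⟨⟨⟨hij, hjn⟩, hs⟩, ht⟩, hu⟩ := h
      rcases tri i j hij hjn with h | h | h
      · exact ihs _ _ _ hs (cons h hr) hb hmm
      · exact iht _ _ _ ht hr (cons h hb) hmm
      · exact ihu _ _ _ hu hr hb (cons h hmm)

/-- Color `i` contains a copy of `sh` inside `S`. -/
def Mono {V K : Type*} (c : V → V → K) (S : Finset V) (i : K) (sh : Shape) : Prop :=
  ∃ l : List V, (∀ x ∈ l, x ∈ S) ∧ IsShape (fun x y => c x y = i) sh l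

/-- On `S` the coloring `c` is a red/blue coloring (colors `r` and `b`), with every vertex on an
edge of both colors, up to the pairs of other colors (void pairs), which form a matching whose
pairs are twins. -/
structure TwoColored {V K : Type*} (c : V → V → K) (S : Finset V) (r b : K) : Prop where
  symm : ∀ x y, c x y = c y x
  ne : r ≠ b
  matching : ∀ x ∈ S, ∀ y ∈ S, ∀ z ∈ S, x ≠ y → x ≠ z → c x y ≠ r → c x y ≠ b →
    c x z ≠ r → c x z ≠ b → y = z
  twin : ∀ x ∈ S, ∀ y ∈ S, ∀ z ∈ S, x ≠ y → z ≠ x → z ≠ y → c x y ≠ r → c x y ≠ b →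
    c x z = c y z
  red : ∀ x ∈ S, ∃ y ∈ S, y ≠ x ∧ c x y = r
  blue : ∀ x ∈ S, ∃ y ∈ S, y ≠ x ∧ c x y = b

lemma TwoColored.swap {V K : Type*} {c : V → V → K} {S : Finset V} {r b : K}
    (T : TwoColored c S r b) : TwoColored c S b r where
  symm := T.symm
  ne := T.ne.symm
  matching x hx y hy z hz h1 h2 h3 h4 h5 h6 := T.matching x hx y hy z hz h1 h2 h4 h3 h6 h5
  twin x hx y hy z hz h1 h2 h3 h4 h5 := T.twin x hx y hy z hz h1 h2 h3 h5 h4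
  red := T.blue
  blue := T.red

lemma IsShape.map {α β : Type*} {P : α → α → Prop} {Q : β → β → Prop} {sh : Shape} {l : List α}
    (h : IsShape P sh l) (f : α → β) (hf : ∀ x ∈ l, ∀ y ∈ l, f x = f y → x = y)
    (hPQ : ∀ x y, P x y → Q (f x) (f y)) : IsShape Q sh (l.map f) := by
  refine ⟨by simpa using h.1, h.2.1.map_on fun x hx y hy e => hf x hx y hy e, ?_⟩
  have e : sh.trail (l.map f) = (sh.trail l).map f := by
    unfold Shape.trail; split <;> simp
  rw [e, List.isChain_map]
  exact h.2.2.imp fun x y => hPQ x y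

/-- A case tree valid for a labelling `L` of some vertices of `S` yields a monochromatic
subgraph. The pairs in `Rl` and `Bl` are the labels of edges known to be red and blue. -/
lemma cert_apply {V K : Type*} {c : V → V → K} {S : Finset V} {r b : K}
    (T : TwoColored c S r b) (x0 : V) (L : List V) (hL : L.Nodup) (hS : ∀ x ∈ L, x ∈ S)
    (tw : Bool) (raw : tw = false → ∀ x ∈ S, ∀ y ∈ S, x ≠ y → c x y = r ∨ c x y = b)
    (shr shb : Shape) (t : Cert) (Rl Bl : List (ℕ × ℕ))
    (hr : ∀ p ∈ Rl, p.1 < L.length ∧ p.2 < L.length ∧ p.1 ≠ p.2 ∧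
      c (L.getD p.1 x0) (L.getD p.2 x0) = r)
    (hb : ∀ p ∈ Bl, p.1 < L.length ∧ p.2 < L.length ∧ p.1 ≠ p.2 ∧
      c (L.getD p.1 x0) (L.getD p.2 x0) = b)
    (hk : check L.length tw shr shb t Rl Bl [] = true) :
    Mono c S r shr ∨ Mono c S b shb := by
  set n := L.length with hn
  set f : ℕ → V := fun i => L.getD i x0 with hf
  have fS : ∀ i, i < n → f i ∈ S := fun i hi => by
    simp only [hf, List.getD_eq_getElem _ _ hi]; exact hS _ (List.getElem_mem _)
  have finj : ∀ i, i < n → ∀ j, j < n → f i = f j → i = j := fun i hi j hj e => by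
    simp only [hf, List.getD_eq_getElem _ _ hi, List.getD_eq_getElem _ _ hj] at e
    exact (hL.getElem_inj_iff).1 e
  have lift : ∀ (sh : Shape) (i : K),
      (∃ l : List ℕ, (∀ x ∈ l, x < n) ∧
        IsShape (fun x y => x < n ∧ y < n ∧ x ≠ y ∧ c (f x) (f y) = i) sh l) →
      Mono c S i sh := by
    rintro sh i ⟨l, hl, h⟩
    refine ⟨l.map f, ?_, h.map f (fun x hx y hy e => finj x (hl x hx) y (hl y hy) e)
      fun x y h => h.2.2.2⟩
    intro x hx
    obtain ⟨a, ha, rfl⟩ := List.mem_map.1 hx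
    exact fS a (hl a ha)
  have sy : ∀ (i : K) (x y : ℕ), (x < n ∧ y < n ∧ x ≠ y ∧ c (f x) (f y) = i) →
      (y < n ∧ x < n ∧ y ≠ x ∧ c (f y) (f x) = i) :=
    fun i x y h => ⟨h.2.1, h.1, h.2.2.1.symm, by rw [T.symm]; exact h.2.2.2⟩
  have nf : ∀ x y, x < n → y < n → x ≠ y → f x ≠ f y := fun x y hx hy h e => h (finj x hx y hy e)
  refine (check_sound (sy r) (sy b)
    (M := fun x y => x < n ∧ y < n ∧ x ≠ y ∧ c (f x) (f y) ≠ r ∧ c (f x) (f y) ≠ b)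
    ?_ ?_ ?_ ?_ ?_ t Rl Bl [] hk hr hb (by simp)).imp (lift shr r) (lift shb b)
  · intro x y h
    refine ⟨h.2.1, h.1, h.2.2.1.symm, ?_⟩
    rw [T.symm]; exact h.2.2.2
  · intro x y hxy hy
    have hx := hxy.trans hy
    have := hxy.ne
    tauto
  · intro h x y hM
    have := raw h _ (fS x hM.1) _ (fS y hM.2.1) (nf x y hM.1 hM.2.1 hM.2.2.1)
    tauto
  · rintro x y z ⟨hx, hy, hxy, h1, h2⟩ ⟨-, hz, hxz, h3, h4⟩
    exact finj _ hy _ hz (T.matching _ (fS x hx) _ (fS y hy) _ (fS z hz) (nf x y hx hy hxy)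
      (nf x z hx hz hxz) h1 h2 h3 h4)
  · rintro x y z ⟨hx, hy, hxy, h1, h2⟩ ⟨-, hz, hxz, h3⟩ ⟨-, -, hyz, h4⟩
    have := T.twin _ (fS x hx) _ (fS y hy) _ (fS z hz) (nf x y hx hy hxy)
      (nf z x hz hx hxz.symm) (nf z y hz hy hyz.symm) h1 h2
    exact T.ne (by rw [← h3, this, h4])

/-! ### Red/blue colorings on six, seven and eight vertices -/

/-- The pairs joining the labels `0` and `1` to the labels `a, …, a + p - 1`. -/
def rowPairs (a p : ℕ) : List (ℕ × ℕ) := (List.range' a p).flatMap fun j => [(0, j), (1, j)]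

lemma exists_list {V : Type*} (S : Finset V) (n : ℕ) (h : n ≤ S.card) :
    ∃ l : List V, l.Nodup ∧ (∀ x ∈ l, x ∈ S) ∧ l.length = n := by
  obtain ⟨A, hA, hc⟩ := Finset.exists_subset_card_eq h
  exact ⟨A.toList, A.nodup_toList, fun x hx => hA (by simpa using hx), by simpa using hc⟩

lemma exists_extend {V : Type*} [DecidableEq V] (S : Finset V) (l : List V) (hl : l.Nodup)
    (hS : ∀ x ∈ l, x ∈ S) (n : ℕ) (h : l.length + n ≤ S.card) :
    ∃ l' : List V, (l ++ l').Nodup ∧ (∀ x ∈ l ++ l', x ∈ S) ∧ l'.length = n := by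
  have h1 : n ≤ (S \ l.toFinset).card := by
    have := Finset.le_card_sdiff l.toFinset S
    rw [List.toFinset_card_of_nodup hl] at this
    omega
  obtain ⟨l', hn, hs, hlen⟩ := exists_list _ n h1
  refine ⟨l', hl.append hn ?_, ?_, hlen⟩
  · intro x hx hx'
    have := hs x hx'
    simp [hx] at this
  · intro x hx
    rcases List.mem_append.1 hx with hx | hx
    · exact hS x hx
    · exact (Finset.mem_sdiff.1 (hs x hx)).1

/-- Case trees for a void pair `u, v` labelled `0, 1`, followed by `p` common red neighbors and
`q` common blue neighbors. -/
lemma twin_apply {V K : Type*} [DecidableEq V] [DecidableEq K] {c : V → V → K} {S : Finset V}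
    {r b : K} (T : TwoColored c S r b) {u v : V} (hu : u ∈ S) (hv : v ∈ S) (huv : u ≠ v)
    (h1 : c u v ≠ r) (h2 : c u v ≠ b) (p q : ℕ)
    (hp : p ≤ (S.filter fun x => x ≠ u ∧ c u x = r).card)
    (hq : q ≤ (S.filter fun x => x ≠ u ∧ c u x = b).card)
    (shr shb : Shape) (t : Cert)
    (hk : check (2 + p + q) true shr shb t (rowPairs 2 p) (rowPairs (2 + p) q) [] = true) :
    Mono c S r shr ∨ Mono c S b shb := by
  obtain ⟨A, hA, hAS, rfl⟩ := exists_list _ p hp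
  obtain ⟨B, hB, hBS, rfl⟩ := exists_list _ q hq
  simp only [Finset.mem_filter] at hAS hBS
  have hvA : v ∉ A := fun h => h1 (hAS v h).2.2
  have hvB : v ∉ B := fun h => h2 (hBS v h).2.2
  have row : ∀ x ∈ S, x ≠ u → x ≠ v → ∀ i, c u x = i → c v x = i := fun x hx hxu hxv i e => by
    rw [← T.twin u hu v hv x hx huv hxu hxv h1 h2, e]
  have hlen : (u :: v :: (A ++ B)).length = 2 + A.length + B.length := by simp; omega
  refine cert_apply T u (u :: v :: (A ++ B)) ?_ ?_ true (by simp) shr shb t _ _ ?_ ?_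
    (by rw [hlen]; exact hk)
  · simp only [List.nodup_cons, List.mem_cons, List.mem_append, not_or]
    refine ⟨⟨huv, fun h => (hAS u h).2.1 rfl, fun h => (hBS u h).2.1 rfl⟩, ⟨hvA, hvB⟩,
      hA.append hB fun x hx hx' => T.ne ?_⟩
    rw [← (hAS x hx).2.2, (hBS x hx').2.2]
  · intro x hx
    simp only [List.mem_cons, List.mem_append] at hx
    rcases hx with rfl | rfl | hx | hx
    exacts [hu, hv, (hAS x hx).1, (hBS x hx).1]
  · intro x hx
    simp only [rowPairs, List.mem_flatMap, List.mem_range'_1] at hx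
    obtain ⟨j, ⟨hj1, hj2⟩, hx⟩ := hx
    obtain ⟨j, rfl⟩ := Nat.exists_eq_add_of_le' hj1
    have hj : j < A.length := by omega
    have e : (u :: v :: (A ++ B)).getD (j + 2) u = A[j] := by
      simp [List.getElem?_append_left hj, hj]
    have hm := hAS _ (List.getElem_mem hj)
    simp only [List.mem_cons, List.not_mem_nil, or_false] at hx
    rw [hlen]
    rcases hx with rfl | rfl
    · exact ⟨by omega, by omega, by simp, by rw [e]; exact hm.2.2⟩
    · exact ⟨by omega, by omega, by simp,
        by rw [e]; exact row _ hm.1 hm.2.1 (fun h => hvA (h ▸ List.getElem_mem hj)) _ hm.2.2⟩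
  · intro x hx
    simp only [rowPairs, List.mem_flatMap, List.mem_range'_1] at hx
    obtain ⟨j, ⟨hj1, hj2⟩, hx⟩ := hx
    obtain ⟨j, rfl⟩ := Nat.exists_eq_add_of_le hj1
    have hj : j < B.length := by omega
    have e : (u :: v :: (A ++ B)).getD (2 + A.length + j) u = B[j] := by
      rw [show 2 + A.length + j = (A.length + j) + 2 by omega]
      simp [hj]
    have hm := hBS _ (List.getElem_mem hj)
    simp only [List.mem_cons, List.not_mem_nil, or_false] at hx
    rw [hlen]
    rcases hx with rfl | rfl
    · exact ⟨by omega, by omega, by simp; omega, by rw [e]; exact hm.2.2⟩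
    · exact ⟨by omega, by omega, by simp; omega,
        by rw [e]; exact row _ hm.1 hm.2.1 (fun h => hvB (h ▸ List.getElem_mem hj)) _ hm.2.2⟩

/-- A void pair `u, v` has at least one blue neighbor in common, and every other vertex is a
common red or a common blue neighbor. -/
lemma twin_rows {V K : Type*} [DecidableEq V] [DecidableEq K] {c : V → V → K} {S : Finset V}
    {r b : K} (T : TwoColored c S r b) {u v : V} (hu : u ∈ S) (hv : v ∈ S) (huv : u ≠ v)
    (h1 : c u v ≠ r) (h2 : c u v ≠ b) :
    1 ≤ (S.filter fun x => x ≠ u ∧ c u x = b).card ∧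
    S.card ≤ (S.filter fun x => x ≠ u ∧ c u x = r).card +
      (S.filter fun x => x ≠ u ∧ c u x = b).card + 2 := by
  constructor
  · obtain ⟨y, hy, hyu, hc⟩ := T.blue u hu
    exact Finset.card_pos.2 ⟨y, by simp [hy, hyu, hc]⟩
  · have hsub : S ⊆ ((S.filter fun x => x ≠ u ∧ c u x = r) ∪
        (S.filter fun x => x ≠ u ∧ c u x = b)) ∪ {u, v} := by
      intro x hx
      simp only [Finset.mem_union, Finset.mem_filter, Finset.mem_insert, Finset.mem_singleton]
      by_contra hcon
      have hxu : x ≠ u := fun h => hcon (.inr (.inl h))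
      have hxv : x ≠ v := fun h => hcon (.inr (.inr h))
      refine hxv (T.matching u hu x hx v hv hxu.symm huv ?_ ?_ h1 h2)
      · exact fun h => hcon (.inl (.inl ⟨hx, hxu, h⟩))
      · exact fun h => hcon (.inl (.inr ⟨hx, hxu, h⟩))
    have := (Finset.card_le_card hsub).trans ((Finset.card_union_le _ _).trans
      (Nat.add_le_add (Finset.card_union_le _ _) Finset.card_le_two))
    exact this

/-- Either there are no void pairs, or a void pair can be chosen. -/
lemma void_cases {V K : Type*} (c : V → V → K) (S : Finset V) (r b : K) :
    (∀ x ∈ S, ∀ y ∈ S, x ≠ y → c x y = r ∨ c x y = b) ∨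
      ∃ u ∈ S, ∃ v ∈ S, u ≠ v ∧ c u v ≠ r ∧ c u v ≠ b := by
  by_cases h : ∀ x ∈ S, ∀ y ∈ S, x ≠ y → c x y = r ∨ c x y = b
  · exact .inl h
  · push Not at h
    exact .inr h

/-- Case trees for a red path on the labels `0, …, m`, followed by `n` further vertices. -/
lemma path_apply {V K : Type*} [DecidableEq V] {c : V → V → K} {S : Finset V}
    {r b : K} (T : TwoColored c S r b) (raw : ∀ x ∈ S, ∀ y ∈ S, x ≠ y → c x y = r ∨ c x y = b)
    (m n : ℕ) (hn : m + 1 + n ≤ S.card) (h : Mono c S r ⟨m + 1, false⟩) (shr shb : Shape) (t : Cert)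
    (hk : check (m + 1 + n) false shr shb t ((List.range m).map fun j => (j, j + 1)) [] [] = true) :
    Mono c S r shr ∨ Mono c S b shb := by
  obtain ⟨l, hlS, hlen, hnd, hch⟩ := h
  simp only [Shape.trail, Bool.false_eq_true, if_false] at hch hlen
  obtain ⟨l', hnd', hS', hlen'⟩ := exists_extend S l hnd hlS n (by rw [hlen]; exact hn)
  have hL : (l ++ l').length = m + 1 + n := by simp [hlen, hlen']
  have hl0 : 0 < l.length := by omega
  refine cert_apply T l[0] (l ++ l') hnd' hS' false (fun _ => raw) shr shb t _ [] ?_ (by simp)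
    (by rw [hL]; exact hk)
  intro p hp
  obtain ⟨j, hj, rfl⟩ := List.mem_map.1 hp
  have hj := List.mem_range.1 hj
  refine ⟨by simp only [hL]; omega, by simp only [hL]; omega, by simp, ?_⟩
  have h1 : j < l.length := by omega
  have h2 : j + 1 < l.length := by omega
  have e1 : (l ++ l').getD j l[0] = l[j] := by simp [List.getElem?_append_left h1, h1]
  have e2 : (l ++ l').getD (j + 1) l[0] = l[j + 1] := by simp [List.getElem?_append_left h2, h2]
  rw [e1, e2]
  exact List.isChain_iff_getElem.1 hch j h2

/-- Weights one and one: six vertices force a monochromatic path on five vertices. -/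
lemma two_six {V K : Type*} [DecidableEq V] [DecidableEq K] {c : V → V → K} {S : Finset V}
    {r b : K} (T : TwoColored c S r b) (hS : 6 ≤ S.card) : Mono c S r P5 ∨ Mono c S b P5 := by
  obtain raw | ⟨u, hu, v, hv, huv, h1, h2⟩ := void_cases c S r b
  · obtain ⟨L, hL, hLS, hlen⟩ := exists_list S 6 hS
    exact cert_apply T (L[0]) L hL hLS false (fun _ => raw) P5 P5 cert_raw6 [] [] (by simp)
      (by simp) (by rw [hlen]; decide +kernel)
  · have app := twin_apply T hu hv huv h1 h2
    obtain ⟨-, hcard⟩ := twin_rows T hu hv huv h1 h2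
    by_cases hr : 3 ≤ (S.filter fun x => x ≠ u ∧ c u x = r).card
    · exact app 3 0 hr (Nat.zero_le _) P5 P5 (.red [2, 0, 3, 1, 4]) (by decide +kernel)
    · by_cases hb : 3 ≤ (S.filter fun x => x ≠ u ∧ c u x = b).card
      · exact app 0 3 (Nat.zero_le _) hb P5 P5 (.blue [2, 0, 3, 1, 4]) (by decide +kernel)
      · exact app 2 2 (by omega) (by omega) P5 P5 cert_twin6 (by decide +kernel)

/-- Weights two and one: seven vertices force a red six-cycle or a blue path on five vertices. -/
lemma two_seven {V K : Type*} [DecidableEq V] [DecidableEq K] {c : V → V → K} {S : Finset V}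
    {r b : K} (T : TwoColored c S r b) (hS : 7 ≤ S.card) : Mono c S r C6 ∨ Mono c S b P5 := by
  obtain raw | ⟨u, hu, v, hv, huv, h1, h2⟩ := void_cases c S r b
  · obtain h | h := two_six T (by omega)
    · exact path_apply T raw 4 2 hS h C6 P5 cert_raw7 (by decide +kernel)
    · exact .inr h
  · have app := twin_apply T hu hv huv h1 h2
    obtain ⟨hb1, hcard⟩ := twin_rows T hu hv huv h1 h2
    by_cases hb : 3 ≤ (S.filter fun x => x ≠ u ∧ c u x = b).card
    · exact app 0 3 (Nat.zero_le _) hb C6 P5 (.blue [2, 0, 3, 1, 4]) (by decide +kernel)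
    · by_cases hb2 : 2 ≤ (S.filter fun x => x ≠ u ∧ c u x = b).card
      · exact app 3 2 (by omega) hb2 C6 P5 cert_twin7_3 (by decide +kernel)
      · exact app 4 1 (by omega) hb1 C6 P5 cert_twin7_4 (by decide +kernel)

/-- A red path on six vertices forces a monochromatic six-cycle. -/
lemma eight_of_P6 {V K : Type*} [DecidableEq V] {c : V → V → K} {S : Finset V}
    {r b : K} (T : TwoColored c S r b) (hS : 8 ≤ S.card)
    (raw : ∀ x ∈ S, ∀ y ∈ S, x ≠ y → c x y = r ∨ c x y = b) (h : Mono c S r P6) :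
    Mono c S r C6 ∨ Mono c S b C6 :=
  path_apply T raw 5 2 hS h C6 C6 cert_raw8b (by decide +kernel)

/-- A red path on five vertices forces a monochromatic six-cycle. -/
lemma eight_of_P5 {V K : Type*} [DecidableEq V] {c : V → V → K} {S : Finset V}
    {r b : K} (T : TwoColored c S r b) (hS : 8 ≤ S.card)
    (raw : ∀ x ∈ S, ∀ y ∈ S, x ≠ y → c x y = r ∨ c x y = b) (h : Mono c S r P5) :
    Mono c S r C6 ∨ Mono c S b C6 := by
  obtain h | h := path_apply T raw 4 3 hS h P6 P6 cert_raw8a (by decide +kernel)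
  · exact eight_of_P6 T hS raw h
  · exact (eight_of_P6 T.swap hS (fun x hx y hy hxy => (raw x hx y hy hxy).symm) h).symm

/-- A void pair with few common blue neighbors forces a monochromatic six-cycle. -/
lemma eight_of_twin {V K : Type*} [DecidableEq V] [DecidableEq K] {c : V → V → K} {S : Finset V}
    {r b : K} (T : TwoColored c S r b) (hS : 8 ≤ S.card) {u v : V} (hu : u ∈ S) (hv : v ∈ S)
    (huv : u ≠ v) (h1 : c u v ≠ r) (h2 : c u v ≠ b)
    (hb : (S.filter fun x => x ≠ u ∧ c u x = b).card ≤ 2) :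
    Mono c S r C6 ∨ Mono c S b C6 := by
  have app := twin_apply T hu hv huv h1 h2
  obtain ⟨hb1, hcard⟩ := twin_rows T hu hv huv h1 h2
  by_cases hb2 : 2 ≤ (S.filter fun x => x ≠ u ∧ c u x = b).card
  · exact app 4 2 (by omega) hb2 C6 C6 cert_twin8_4 (by decide +kernel)
  · exact app 5 1 (by omega) hb1 C6 C6 cert_twin8_5 (by decide +kernel)

/-- Weights two and two: eight vertices force a monochromatic six-cycle. -/
lemma two_eight {V K : Type*} [DecidableEq V] [DecidableEq K] {c : V → V → K} {S : Finset V}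
    {r b : K} (T : TwoColored c S r b) (hS : 8 ≤ S.card) : Mono c S r C6 ∨ Mono c S b C6 := by
  obtain raw | ⟨u, hu, v, hv, huv, h1, h2⟩ := void_cases c S r b
  · obtain h | h := two_six T (by omega)
    · exact eight_of_P5 T hS raw h
    · exact (eight_of_P5 T.swap hS (fun x hx y hy hxy => (raw x hx y hy hxy).symm) h).symm
  · by_cases hb : (S.filter fun x => x ≠ u ∧ c u x = b).card ≤ 2
    · exact eight_of_twin T hS hu hv huv h1 h2 hb
    · by_cases hr : (S.filter fun x => x ≠ u ∧ c u x = r).card ≤ 2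
      · exact (eight_of_twin T.swap hS hu hv huv h2 h1 hr).symm
      · exact twin_apply T hu hv huv h1 h2 3 3 (by omega) (by omega) C6 C6 cert_twin8_3
          (by decide +kernel)

/-! ### Forbidden subgraphs of weight two, one and zero, and homogeneous sets -/

/-- What color `i` must avoid inside `S` at weight `t`: six-cycles at weight two, paths on five
vertices at weight one, and any two distinct edges at weight zero. -/
def Avoid {V K : Type*} (c : V → V → K) (S : Finset V) (i : K) : ℕ → Prop
  | 0 => (∀ x ∈ S, ∀ y ∈ S, ∀ z ∈ S, [x, y, z].Nodup → c x y = i → c y z = i → False) ∧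
      (∀ x ∈ S, ∀ y ∈ S, ∀ z ∈ S, ∀ w ∈ S, [x, y, z, w].Nodup → c x y = i → c z w = i → False)
  | 1 => ¬ Mono c S i P5
  | _ + 2 => ¬ Mono c S i C6

lemma mono_P5 {V K : Type*} {c : V → V → K} {S : Finset V} {i : K} {v1 v2 v3 v4 v5 : V}
    (hS : ∀ x ∈ [v1, v2, v3, v4, v5], x ∈ S) (hn : [v1, v2, v3, v4, v5].Nodup)
    (h1 : c v1 v2 = i) (h2 : c v2 v3 = i) (h3 : c v3 v4 = i) (h4 : c v4 v5 = i) :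
    Mono c S i P5 :=
  ⟨_, hS, rfl, hn, by simp [Shape.trail, P5, h1, h2, h3, h4]⟩

lemma mono_C6 {V K : Type*} {c : V → V → K} {S : Finset V} {i : K} {v1 v2 v3 v4 v5 v6 : V}
    (hS : ∀ x ∈ [v1, v2, v3, v4, v5, v6], x ∈ S) (hn : [v1, v2, v3, v4, v5, v6].Nodup)
    (h1 : c v1 v2 = i) (h2 : c v2 v3 = i) (h3 : c v3 v4 = i) (h4 : c v4 v5 = i)
    (h5 : c v5 v6 = i) (h6 : c v6 v1 = i) :
    Mono c S i C6 :=
  ⟨_, hS, rfl, hn, by simp [Shape.trail, C6, h1, h2, h3, h4, h5, h6]⟩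

lemma Mono.subset {V K : Type*} {c : V → V → K} {S H : Finset V} (hH : H ⊆ S) {i : K}
    {sh : Shape} (h : Mono c H i sh) : Mono c S i sh := by
  obtain ⟨l, hl, h⟩ := h
  exact ⟨l, fun x hx => hH (hl x hx), h⟩

lemma Avoid.subset {V K : Type*} {c : V → V → K} {S H : Finset V} (hH : H ⊆ S) {i : K} :
    ∀ {t : ℕ}, Avoid c S i t → Avoid c H i t
  | 0, h => ⟨fun x hx y hy z hz => h.1 x (hH hx) y (hH hy) z (hH hz),
      fun x hx y hy z hz w hw => h.2 x (hH hx) y (hH hy) z (hH hz) w (hH hw)⟩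
  | 1, h => fun h' => h (h'.subset hH)
  | _ + 2, h => fun h' => h (h'.subset hH)

lemma Mono.explicit_P5 {V K : Type*} {c : V → V → K} {S : Finset V} {i : K} (h : Mono c S i P5) :
    ∃ v1 v2 v3 v4 v5, (∀ x ∈ [v1, v2, v3, v4, v5], x ∈ S) ∧ [v1, v2, v3, v4, v5].Nodup ∧
      c v1 v2 = i ∧ c v2 v3 = i ∧ c v3 v4 = i ∧ c v4 v5 = i := by
  obtain ⟨l, hl, hlen, hn, hc⟩ := h
  match l, hlen with
  | [v1, v2, v3, v4, v5], _ =>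
    refine ⟨v1, v2, v3, v4, v5, hl, hn, ?_⟩
    simpa [Shape.trail, P5] using hc

lemma Mono.explicit_C6 {V K : Type*} {c : V → V → K} {S : Finset V} {i : K} (h : Mono c S i C6) :
    ∃ v1 v2 v3 v4 v5 v6, (∀ x ∈ [v1, v2, v3, v4, v5, v6], x ∈ S) ∧
      [v1, v2, v3, v4, v5, v6].Nodup ∧
      c v1 v2 = i ∧ c v2 v3 = i ∧ c v3 v4 = i ∧ c v4 v5 = i ∧ c v5 v6 = i ∧ c v6 v1 = i := by
  obtain ⟨l, hl, hlen, hn, hc⟩ := h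
  match l, hlen with
  | [v1, v2, v3, v4, v5, v6], _ =>
    refine ⟨v1, v2, v3, v4, v5, v6, hl, hn, ?_⟩
    simpa [Shape.trail, C6] using hc

/-- If all vertices of `R` are joined to all of `H` in color `i`, then `R` has at most `t`
elements, and each of them lowers the weight of the color inside `H` by one. -/
lemma downgrade {V K : Type*} [DecidableEq V] {c : V → V → K} (symm : ∀ x y, c x y = c y x)
    {S H R : Finset V} (hH : H ⊆ S) (hR : R ⊆ S \ H) {i : K}
    (hc : ∀ w ∈ R, ∀ x ∈ H, c w x = i) (h3 : 3 ≤ H.card) {t : ℕ} (ht : t ≤ 2)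
    (hA : Avoid c S i t) : R.card ≤ t ∧ (4 ≤ H.card → Avoid c H i (t - R.card)) := by
  have hc' : ∀ x ∈ H, ∀ w ∈ R, c x w = i := fun x hx w hw => by rw [symm]; exact hc w hw x hx
  have hne : ∀ w ∈ R, ∀ x ∈ H, w ≠ x ∧ x ≠ w := fun w hw x hx => by
    have := (Finset.mem_sdiff.1 (hR hw)).2
    constructor <;> rintro rfl <;> exact this hx
  have hRS : ∀ w ∈ R, w ∈ S := fun w hw => (Finset.mem_sdiff.1 (hR hw)).1
  have fresh : 4 ≤ H.card → ∀ x y z : V, ∃ a ∈ H, a ≠ x ∧ a ≠ y ∧ a ≠ z := fun h4 x y z => by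
    obtain ⟨a, ha, hn⟩ := Finset.exists_mem_notMem_of_card_lt_card
      (lt_of_le_of_lt (Finset.card_le_three (a := x) (b := y) (c := z)) h4)
    simp only [Finset.mem_insert, Finset.mem_singleton, not_or] at hn
    exact ⟨a, ha, hn⟩
  obtain ⟨x, hx, y, hy, z, hz, hxy, hxz, hyz⟩ := Finset.two_lt_card.1 h3
  rcases Nat.eq_zero_or_pos R.card with h0 | hpos
  · rw [h0]; exact ⟨Nat.zero_le _, fun _ => hA.subset hH⟩
  obtain ⟨u, hu⟩ := Finset.card_pos.1 hpos
  -- Each case extends a forbidden subgraph for the lowered weight, or an alternating path between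
  -- `R` and `H`, to the subgraph forbidden in `S`.
  interval_cases t
  · exact (hA.1 x (hH hx) u (hRS u hu) y (hH hy) (by have := hne u hu; simp; grind)
      (hc' x hx u hu) (hc u hu y hy)).elim
  · by_cases h1 : 1 < R.card
    · obtain ⟨v, hv, w, hw, hvw⟩ := Finset.one_lt_card.1 h1
      refine (hA (mono_P5 (v1 := x) (v2 := v) (v3 := y) (v4 := w) (v5 := z) ?_ ?_ (hc' x hx v hv)
        (hc v hv y hy) (hc' y hy w hw) (hc w hw z hz))).elim
      · have := hRS v hv; have := hRS w hw; simp; grind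
      · have := hne v hv; have := hne w hw; simp; grind
    · have e : R.card = 1 := by omega
      rw [e]
      refine ⟨le_rfl, fun h4 => ⟨fun x hx y hy z hz hn hxy hyz => ?_,
        fun x hx y hy z hz w hw hn hxy hzw => ?_⟩⟩
      · obtain ⟨a, ha, h⟩ := fresh h4 x y z
        refine hA (mono_P5 (v1 := x) (v2 := y) (v3 := z) (v4 := u) (v5 := a) ?_ ?_ hxy hyz
          (hc' z hz u hu) (hc u hu a ha))
        · have := hRS u hu; simp; grind
        · have := hne u hu; simp at hn ⊢; grind
      · refine hA (mono_P5 (v1 := x) (v2 := y) (v3 := u) (v4 := z) (v5 := w) ?_ ?_ hxy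
          (hc' y hy u hu) (hc u hu z hz) hzw)
        · have := hRS u hu; simp; grind
        · have := hne u hu; simp at hn ⊢; grind
  · by_cases h2 : 2 < R.card
    · obtain ⟨u, hu, v, hv, w, hw, huv, huw, hvw⟩ := Finset.two_lt_card.1 h2
      refine (hA (mono_C6 (v1 := x) (v2 := u) (v3 := y) (v4 := v) (v5 := z) (v6 := w) ?_ ?_
        (hc' x hx u hu) (hc u hu y hy) (hc' y hy v hv) (hc v hv z hz) (hc' z hz w hw)
        (hc w hw x hx))).elim
      · have := hRS u hu; have := hRS v hv; have := hRS w hw; simp; grind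
      · have := hne u hu; have := hne v hv; have := hne w hw; simp; grind
    refine ⟨by omega, fun h4 => ?_⟩
    by_cases h1 : 1 < R.card
    · obtain ⟨v, hv, w, hw, hvw⟩ := Finset.one_lt_card.1 h1
      have e : 2 - R.card = 0 := by omega
      rw [e]
      refine ⟨fun x hx y hy z hz hn hxy hyz => ?_, fun x hx y hy z hz a ha hn hxy hza => ?_⟩
      · obtain ⟨a, ha, h⟩ := fresh h4 x y z
        refine hA (mono_C6 (v1 := x) (v2 := y) (v3 := z) (v4 := v) (v5 := a) (v6 := w) ?_ ?_ hxy hyz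
          (hc' z hz v hv) (hc v hv a ha) (hc' a ha w hw) (hc w hw x hx))
        · have := hRS v hv; have := hRS w hw; simp; grind
        · have := hne v hv; have := hne w hw; simp at hn ⊢; grind
      · refine hA (mono_C6 (v1 := x) (v2 := y) (v3 := v) (v4 := z) (v5 := a) (v6 := w) ?_ ?_ hxy
          (hc' y hy v hv) (hc v hv z hz) hza (hc' a ha w hw) (hc w hw x hx))
        · have := hRS v hv; have := hRS w hw; simp; grind
        · have := hne v hv; have := hne w hw; simp at hn ⊢; grind
    · have e : 2 - R.card = 1 := by omega
      rw [e]
      intro hP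
      obtain ⟨v1, v2, v3, v4, v5, hm, hn, e1, e2, e3, e4⟩ := hP.explicit_P5
      simp only [List.mem_cons, List.not_mem_nil, or_false, forall_eq_or_imp, forall_eq] at hm
      refine hA (mono_C6 (v1 := v1) (v2 := v2) (v3 := v3) (v4 := v4) (v5 := v5) (v6 := u) ?_ ?_
        e1 e2 e3 e4 (hc' _ hm.2.2.2.2 u hu) (hc u hu _ hm.1))
      · have := hRS u hu; simp; grind
      · have := hne u hu; simp at hn ⊢; grind

/-! ### Color components in Gallai colorings -/

/-- No triangle is rainbow. -/
def Gallai {V K : Type*} (c : V → V → K) : Prop :=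
  ∀ x y z, x ≠ y → y ≠ z → x ≠ z → c x y = c y z ∨ c y z = c x z ∨ c x y = c x z

/-- `y` can be reached from `x` along edges of color `i` inside `S`. -/
def Reach {V K : Type*} (c : V → V → K) (S : Finset V) (i : K) : V → V → Prop :=
  Relation.ReflTransGen fun x y => x ∈ S ∧ y ∈ S ∧ x ≠ y ∧ c x y = i

/-- Color `i` spans a connected graph on `S`. -/
def Conn {V K : Type*} (c : V → V → K) (S : Finset V) (i : K) : Prop :=
  ∀ x ∈ S, ∀ y ∈ S, Reach c S i x y

section
variable {V K : Type*} {c : V → V → K} {S : Finset V} {i : K}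

lemma Reach.single {x y : V} (hx : x ∈ S) (hy : y ∈ S) (hxy : x ≠ y) (h : c x y = i) :
    Reach c S i x y := Relation.ReflTransGen.single ⟨hx, hy, hxy, h⟩

lemma Reach.symm (symm : ∀ x y, c x y = c y x) {x y : V} (h : Reach c S i x y) :
    Reach c S i y x := by
  induction h with
  | refl => exact .refl
  | tail _ h ih => exact .head ⟨h.2.1, h.1, h.2.2.1.symm, by rw [symm]; exact h.2.2.2⟩ ih

/-- A vertex outside a color component sees the whole component in a single color. -/
lemma Reach.homog (symm : ∀ x y, c x y = c y x) (G : Gallai c) {x y w : V} (hw : w ∈ S)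
    (h : ¬ Reach c S i x w) (hxy : Reach c S i x y) : c w x = c w y := by
  induction hxy with
  | refl => rfl
  | @tail y z hxy hyz ih =>
    obtain ⟨hy, hz, hne, e⟩ := hyz
    have hxz : Reach c S i x z := hxy.tail ⟨hy, hz, hne, e⟩
    have hwy : w ≠ y := fun e => h (e ▸ hxy)
    have hwz : w ≠ z := fun e => h (e ▸ hxz)
    have n1 : c w y ≠ i := fun e => h (hxy.tail ⟨hy, hw, hwy.symm, by rw [symm]; exact e⟩)
    have n2 : c w z ≠ i := fun e => h (hxz.tail ⟨hz, hw, hwz.symm, by rw [symm]; exact e⟩)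
    rcases G w y z hwy hne hwz with h | h | h
    · exact (n1 (h.trans e)).elim
    · exact (n2 (h.symm.trans e)).elim
    · exact ih.trans h

lemma Conn.exists_edge (h : Conn c S i) (hS : 2 ≤ S.card) {v : V} (hv : v ∈ S) :
    ∃ w ∈ S, w ≠ v ∧ c v w = i := by
  obtain ⟨w, hw, hne⟩ := Finset.exists_mem_ne hS v
  rcases (h v hv w hw).cases_head with e | ⟨y, ⟨-, hy, hvy, e⟩, -⟩
  · exact (hne e.symm).elim
  · exact ⟨y, hy, hvy.symm, e⟩

/-- If a connected color becomes disconnected on deleting `v`, then `v` lies on edges of at most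
one further color. -/
lemma gallai_step [DecidableEq V] (symm : ∀ x y, c x y = c y x) (G : Gallai c) {v : V} (hv : v ∈ S)
    (hi : Conn c S i) (hn : ¬ Conn c (S.erase v) i) {y y' : V}
    (hy : y ∈ S) (hyv : y ≠ v) (hy' : y' ∈ S) (hyv' : y' ≠ v) (h1 : c v y ≠ i) (h2 : c v y' ≠ i) :
    c v y = c v y' := by
  have hyE := Finset.mem_erase.2 ⟨hyv, hy⟩
  have hyE' := Finset.mem_erase.2 ⟨hyv', hy'⟩
  -- every component of color `i` left after deleting `v` is joined to `v` in color `i`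
  have touch : ∀ x ∈ S.erase v, ∃ x' ∈ S.erase v, Reach c (S.erase v) i x x' ∧ c v x' = i := by
    intro x hx
    by_contra hcon
    have key : ∀ z, Reach c S i x z → Reach c (S.erase v) i x z ∧ z ∈ S.erase v := by
      intro z hz
      induction hz with
      | refl => exact ⟨.refl, hx⟩
      | @tail a b _ hab ih =>
        by_cases hb : b = v
        · subst hb
          exact (hcon ⟨a, ih.2, ih.1, by rw [symm]; exact hab.2.2.2⟩).elim
        · have hb' := Finset.mem_erase.2 ⟨hb, hab.2.1⟩
          exact ⟨ih.1.tail ⟨ih.2, hb', hab.2.2⟩, hb'⟩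
    exact (Finset.mem_erase.1 (key v (hi x (Finset.mem_erase.1 hx).2 v hv)).2).1 rfl
  -- so `y` sees the components of color `i` other than its own in the color of `v y`
  have far : ∀ y ∈ S.erase v, c v y ≠ i → ∀ x ∈ S.erase v, ¬ Reach c (S.erase v) i x y →
      c y x = c v y := by
    intro y hy hvy x hx hxy
    obtain ⟨x', hx', hr, hvx'⟩ := touch x hx
    have hx'y : ¬ Reach c (S.erase v) i x' y := fun h => hxy (hr.trans h)
    have hne : x' ≠ y := fun e => hx'y (e ▸ .refl)
    have hn : c x' y ≠ i := fun e => hx'y (.single hx' hy hne e)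
    rw [Reach.homog symm G hy hxy hr, symm y x']
    rcases G v x' y (Finset.mem_erase.1 hx').1.symm hne (Finset.mem_erase.1 hy).1.symm with h | h | h
    · exact (hn (h.symm.trans hvx')).elim
    · exact h
    · exact (hvy (h.symm.trans hvx')).elim
  by_cases hyy : Reach c (S.erase v) i y y'
  · have : ∃ x ∈ S.erase v, ¬ Reach c (S.erase v) i y x := by
      by_contra hcon
      push Not at hcon
      exact hn fun a ha b hb => ((hcon a ha).symm symm).trans (hcon b hb)
    obtain ⟨x, hx, hyx⟩ := this
    rw [← far y hyE h1 x hx fun h => hyx (h.symm symm),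
      ← far y' hyE' h2 x hx fun h => hyx (hyy.trans (h.symm symm)), symm y x, symm y' x]
    exact Reach.homog symm G hx hyx hyy
  · rw [← far y hyE h1 y' hyE' fun h => hyy (h.symm symm), ← far y' hyE' h2 y hyE hyy, symm]

/-- At most two colors of a Gallai coloring are connected. -/
lemma gallai_two [DecidableEq V] (symm : ∀ x y, c x y = c y x) (G : Gallai c) {i j l : K}
    (hij : i ≠ j) (hil : i ≠ l) (hjl : j ≠ l) : ∀ (n : ℕ) (S : Finset V), S.card = n + 2 →
      Conn c S i → Conn c S j → Conn c S l → False := by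
  intro n
  induction n with
  | zero =>
    intro S hS hi hj _
    obtain ⟨x, y, hxy, rfl⟩ := Finset.card_eq_two.1 hS
    obtain ⟨a, ha, hax, h1⟩ := hi.exists_edge hS.ge (Finset.mem_insert_self x _)
    obtain ⟨b, hb, hbx, h2⟩ := hj.exists_edge hS.ge (Finset.mem_insert_self x _)
    simp only [Finset.mem_insert, Finset.mem_singleton] at ha hb
    grind
  | succ n ih =>
    intro S hS hi hj hl
    obtain ⟨v, hv⟩ := Finset.card_pos.1 (by omega : 0 < S.card)
    obtain ⟨a, ha, hav, h1⟩ := hi.exists_edge (by omega) hv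
    obtain ⟨b, hb, hbv, h2⟩ := hj.exists_edge (by omega) hv
    obtain ⟨d, hd, hdv, h3⟩ := hl.exists_edge (by omega) hv
    by_cases ni : Conn c (S.erase v) i
    · by_cases nj : Conn c (S.erase v) j
      · by_cases nl : Conn c (S.erase v) l
        · exact ih (S.erase v) (by rw [Finset.card_erase_of_mem hv]; omega) ni nj nl
        · have := gallai_step symm G hv hl nl ha hav hb hbv (by rw [h1]; exact hil)
            (by rw [h2]; exact hjl)
          exact hij (by rw [← h1, this, h2])
      · have := gallai_step symm G hv hj nj ha hav hd hdv (by rw [h1]; exact hij)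
          (by rw [h3]; exact hjl.symm)
        exact hil (by rw [← h1, this, h3])
    · have := gallai_step symm G hv hi ni hb hbv hd hdv (by rw [h2]; exact hij.symm)
        (by rw [h3]; exact hil.symm)
      exact hjl (by rw [← h2, this, h3])

end

/-! ### The upper bound -/

section
variable {V K : Type*} [DecidableEq V] {c : V → V → K} {S : Finset V}

/-- An edge of a disconnected color is a whole component, and a twin pair, if every proper
homogeneous set has at most two elements. -/
lemma component_edge (symm : ∀ x y, c x y = c y x) (G : Gallai c)
    (hom : ∀ H ⊂ S, (∀ w ∈ S \ H, ∀ x ∈ H, ∀ y ∈ H, c w x = c w y) → H.card ≤ 2) {x y : V}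
    (hx : x ∈ S) (hy : y ∈ S) (hxy : x ≠ y) (hn : ¬ Conn c S (c x y)) {z : V} (hz : z ∈ S)
    (hzx : z ≠ x) (hzy : z ≠ y) :
    c x z ≠ c x y ∧ c y z ≠ c x y ∧ c z x = c z y := by
  classical
  set H := S.filter fun v => Reach c S (c x y) x v with hH
  have rxy : Reach c S (c x y) x y := .single hx hy hxy rfl
  have hH2 : H.card ≤ 2 := by
    refine hom H ⟨Finset.filter_subset _ _, fun hsub => hn ?_⟩ ?_
    · intro a ha b hb
      have ra := (Finset.mem_filter.1 (hsub ha)).2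
      have rb := (Finset.mem_filter.1 (hsub hb)).2
      exact (ra.symm symm).trans rb
    · intro w hw a ha b hb
      obtain ⟨hwS, hwH⟩ := Finset.mem_sdiff.1 hw
      have ra := (Finset.mem_filter.1 ha).2
      have rb := (Finset.mem_filter.1 hb).2
      have hw' : ¬ Reach c S (c x y) x w := fun h => hwH (Finset.mem_filter.2 ⟨hwS, h⟩)
      exact Reach.homog symm G hwS (fun h => hw' (ra.trans h)) ((ra.symm symm).trans rb)
  have hzH : ¬ Reach c S (c x y) x z := by
    intro h
    have : ({x, y, z} : Finset V) ⊆ H := by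
      intro v hv
      simp only [Finset.mem_insert, Finset.mem_singleton] at hv
      rcases hv with rfl | rfl | rfl
      · exact Finset.mem_filter.2 ⟨hx, .refl⟩
      · exact Finset.mem_filter.2 ⟨hy, rxy⟩
      · exact Finset.mem_filter.2 ⟨hz, h⟩
    have := Finset.card_le_card this
    rw [Finset.card_eq_three.2 ⟨x, y, z, hxy, hzx.symm, hzy.symm, rfl⟩] at this
    omega
  exact ⟨fun e => hzH (.single hx hz hzx.symm e),
    fun e => hzH (rxy.tail ⟨hy, hz, hzy.symm, e⟩), Reach.homog symm G hz hzH rxy⟩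

/-- A connected color on at least three vertices has positive weight. -/
lemma Conn.weight_pos (symm : ∀ x y, c x y = c y x) {i : K} (h : Conn c S i) (hS : 3 ≤ S.card)
    {t : ℕ} (hA : Avoid c S i t) : 1 ≤ t := by
  by_contra! h0
  obtain rfl : t = 0 := by omega
  obtain ⟨x, hx⟩ := Finset.card_pos.1 (by omega : 0 < S.card)
  obtain ⟨y, hy, hyx, e⟩ := h.exists_edge (by omega) hx
  obtain ⟨z, hz, hn⟩ := Finset.exists_mem_notMem_of_card_lt_card
    (lt_of_le_of_lt (Finset.card_le_two (a := x) (b := y)) hS)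
  simp only [Finset.mem_insert, Finset.mem_singleton, not_or] at hn
  obtain ⟨w, hw, hwz, e4⟩ := h.exists_edge (by omega) hz
  have e2 : c y x = i := by rw [symm]; exact e
  have e3 : c w z = i := by rw [symm]; exact e4
  by_cases wx : w = x
  · subst wx
    exact hA.1 y hy w hw z hz (by simp; grind) e2 e3
  by_cases wy : w = y
  · subst wy
    exact hA.1 x hx w hw z hz (by simp; grind) e e3
  exact hA.2 x hx y hy z hz w hw (by simp; grind) e e4

/-- A Gallai coloring in which the colors avoid the subgraphs prescribed by the weights `t` has at
most `3 + ∑ t i` vertices. -/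
theorem card_le [DecidableEq K] [Fintype K] (symm : ∀ x y, c x y = c y x) (G : Gallai c) :
    ∀ (n : ℕ) (S : Finset V) (t : K → ℕ), S.card = n → (∀ i, t i ≤ 2) →
      (∀ i, Avoid c S i (t i)) → S.card ≤ 3 + ∑ i, t i := by
  intro n
  induction n using Nat.strong_induction_on with
  | _ n ih =>
  intro S t hn ht hA
  by_contra! hbig
  have hom : ∀ H ⊂ S, (∀ w ∈ S \ H, ∀ x ∈ H, ∀ y ∈ H, c w x = c w y) → H.card ≤ 2 := by
    intro H hHS hc
    by_contra! h3
    obtain ⟨h0, hh0⟩ := Finset.card_pos.1 (by omega : 0 < H.card)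
    -- the vertices outside `H`, sorted by the color in which they see `H`
    let R : K → Finset V := fun i => (S \ H).filter fun w => c w h0 = i
    have hR : ∀ i, (R i).card ≤ t i ∧ (4 ≤ H.card → Avoid c H i (t i - (R i).card)) := fun i =>
      downgrade symm hHS.1 (Finset.filter_subset _ _) (fun w hw x hx => by
        obtain ⟨hw1, hw2⟩ := Finset.mem_filter.1 hw
        rw [hc w hw1 x hx h0 hh0, hw2]) h3 (ht i) (hA i)
    have hsum : (S \ H).card = ∑ i, (R i).card :=
      Finset.card_eq_sum_card_fiberwise fun _ _ => Finset.mem_coe.2 (Finset.mem_univ _)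
    have hle : ∑ i, (R i).card ≤ ∑ i, t i := Finset.sum_le_sum fun i _ => (hR i).1
    have hcard : (S \ H).card + H.card = S.card := Finset.card_sdiff_add_card_eq_card hHS.1
    by_cases h4 : 4 ≤ H.card
    · have := ih H.card (hn ▸ Finset.card_lt_card hHS) H (fun i => t i - (R i).card) rfl
        (fun i => (Nat.sub_le _ _).trans (ht i)) (fun i => (hR i).2 h4)
      have hs : ∑ i, (t i - (R i).card) + ∑ i, (R i).card = ∑ i, t i := by
        rw [← Finset.sum_add_distrib]
        exact Finset.sum_congr rfl fun i _ => Nat.sub_add_cancel (hR i).1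
      omega
    · omega
  have comp := fun {x y : V} hx hy hxy hn {z : V} hz hzx hzy =>
    component_edge symm G hom (x := x) (y := y) hx hy hxy hn (z := z) hz hzx hzy
  have hmatch : ∀ x ∈ S, ∀ y ∈ S, ∀ z ∈ S, x ≠ y → x ≠ z → ¬ Conn c S (c x y) →
      ¬ Conn c S (c x z) → y = z := by
    intro x hx y hy z hz hxy hxz n1 n2
    by_contra hyz
    have h1 := (comp hx hy hxy n1 hz hxz.symm (Ne.symm hyz)).2.2
    have h2 := (comp hx hz hxz n2 hy hxy.symm hyz).2.1
    exact h2 (by rw [← h1, symm])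
  obtain ⟨r, hr⟩ : ∃ r, Conn c S r := by
    by_contra! hcon
    obtain ⟨x, hx, y, hy, z, hz, hxy, hxz, hyz⟩ := Finset.two_lt_card.1 (by omega : 2 < S.card)
    exact hyz (hmatch x hx y hy z hz hxy hxz (hcon _) (hcon _))
  obtain ⟨b, hrb, hb⟩ : ∃ b, r ≠ b ∧ Conn c S b := by
    by_contra! hcon
    obtain ⟨u, hu⟩ := Finset.card_pos.1 (by omega : 0 < S.card)
    have pos := hr.weight_pos symm (by omega) (hA r)
    have : t r ≤ ∑ i, t i := Finset.single_le_sum (fun i _ => Nat.zero_le _) (Finset.mem_univ r)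
    by_cases hv : ∃ v ∈ S, v ≠ u ∧ c u v ≠ r
    · obtain ⟨v, hv, hvu, e⟩ := hv
      have hnv := hcon (c u v) e.symm
      -- `u` and `v` are twins joined to all other vertices in color `r`
      have key : ∀ w ∈ S, w ≠ u → w ≠ v → c u w = r ∧ c v w = r := by
        intro w hw hwu hwv
        have h1 : c u w = r := by
          by_contra h
          exact hwv (hmatch u hu w hw v hv hwu.symm hvu.symm (hcon _ (Ne.symm h)) hnv)
        refine ⟨h1, ?_⟩
        rw [symm, ← (comp hu hv hvu.symm hnv hw hwu hwv).2.2, symm, h1]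
      have := hom ((S.erase u).erase v) ⟨(Finset.erase_subset _ _).trans (Finset.erase_subset _ _),
        fun h => by simpa using h hu⟩ (by
          intro w hw x hx y hy
          simp only [Finset.mem_sdiff, Finset.mem_erase] at hw hx hy
          obtain rfl | rfl : w = v ∨ w = u := by tauto
          · rw [(key x hx.2.2 hx.2.1 hx.1).2, (key y hy.2.2 hy.2.1 hy.1).2]
          · rw [(key x hx.2.2 hx.2.1 hx.1).1, (key y hy.2.2 hy.2.1 hy.1).1])
      rw [Finset.card_erase_of_mem (Finset.mem_erase.2 ⟨hvu, hv⟩),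
        Finset.card_erase_of_mem hu] at this
      omega
    · push Not at hv
      have := hom (S.erase u) (Finset.erase_ssubset hu) (by
        intro w hw x hx y hy
        simp only [Finset.mem_sdiff, Finset.mem_erase] at hw hx hy
        obtain rfl : w = u := by tauto
        rw [hv x hx.2 hx.1, hv y hy.2 hy.1])
      rw [Finset.card_erase_of_mem hu] at this
      omega
  have hnc : ∀ i, i ≠ r → i ≠ b → ¬ Conn c S i := fun i h1 h2 h =>
    gallai_two symm G hrb h1.symm h2.symm (S.card - 2) S (by omega) hr hb h
  have T : TwoColored c S r b :=
    { symm := symm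
      ne := hrb
      matching := fun x hx y hy z hz hxy hxz h1 h2 h3 h4 =>
        hmatch x hx y hy z hz hxy hxz (hnc _ h1 h2) (hnc _ h3 h4)
      twin := fun x hx y hy z hz hxy hzx hzy h1 h2 => by
        rw [symm x z, symm y z]
        exact (comp hx hy hxy (hnc _ h1 h2) hz hzx hzy).2.2
      red := fun x hx => hr.exists_edge (by omega) hx
      blue := fun x hx => hb.exists_edge (by omega) hx }
  have r1 := hr.weight_pos symm (by omega) (hA r)
  have b1 := hb.weight_pos symm (by omega) (hA b)
  have hrb2 : t r + t b ≤ ∑ i, t i := by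
    rw [← Finset.sum_pair hrb]
    exact Finset.sum_le_sum_of_subset (Finset.subset_univ _)
  have hAr := hA r
  have hAb := hA b
  have r2 := ht r
  have b2 := ht b
  generalize t r = tr at *
  generalize t b = tb at *
  obtain rfl | rfl : tr = 1 ∨ tr = 2 := by omega
  · obtain rfl | rfl : tb = 1 ∨ tb = 2 := by omega
    · exact (two_six T (by omega)).elim hAr hAb
    · exact (two_seven T.swap (by omega)).elim hAb hAr
  · obtain rfl | rfl : tb = 1 ∨ tb = 2 := by omega
    · exact (two_seven T (by omega)).elim hAr hAb
    · exact (two_eight T (by omega)).elim hAr hAb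

end

/-- Every Gallai coloring on `2k + 4` vertices contains a monochromatic six-cycle. -/
lemma ramseyProp_of_eq (k : ℕ) : GallaiRamseyProp (fun _ : Fin k =>
    (⟨6, SimpleGraph.cycleGraph 6⟩ : Σ V : ℕ, SimpleGraph (Fin V))) (2 * k + 4) := by
  intro c hG
  let d : Fin (2 * k + 4) → Fin (2 * k + 4) → Fin k := fun x y => c s(x, y)
  have symm : ∀ x y, d x y = d y x := fun x y => by simp only [d, Sym2.eq_swap]
  by_contra! hcon
  have := card_le symm hG _ Finset.univ (fun _ => 2) rfl (fun _ => le_rfl) (by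
    intro i hM
    obtain ⟨v1, v2, v3, v4, v5, v6, -, hn, e1, e2, e3, e4, e5, e6⟩ := hM.explicit_C6
    refine hcon i ⟨![v1, v2, v3, v4, v5, v6], ?_, ?_⟩
    · intro a b hab
      simp only [List.nodup_cons, List.mem_cons, List.not_mem_nil] at hn
      fin_cases a <;> fin_cases b <;> simp at hab ⊢ <;> grind
    · have f1 := (symm _ _).trans e1
      have f2 := (symm _ _).trans e2
      have f3 := (symm _ _).trans e3
      have f4 := (symm _ _).trans e4
      have f5 := (symm _ _).trans e5
      have f6 := (symm _ _).trans e6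
      intro u v huv
      have adj : ∀ u v : Fin 6, (SimpleGraph.cycleGraph 6).Adj u v →
          (u.1 + 1) % 6 = v.1 ∨ (v.1 + 1) % 6 = u.1 := by decide
      have h := adj u v huv
      fin_cases u <;> fin_cases v <;> first | assumption | simp at h)
  simp at this
  omega

/-! ### The lower bound -/

/-- The extremal coloring: an edge with larger endpoint `m` has color `0` for `m ≤ 4` and
color `(m - 3) / 2` otherwise, with truncated subtraction. -/
def layerColor (k N : ℕ) (hk : 1 ≤ k) (hN : N < 2 * k + 4) : Sym2 (Fin N) → Fin k :=
  Sym2.lift ⟨fun x y => ⟨(max x.1 y.1 - 3) / 2, by omega⟩, fun x y => by simp only [max_comm]⟩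

lemma layerColor_val {k N : ℕ} (hk : 1 ≤ k) (hN : N < 2 * k + 4) (x y : Fin N) :
    (layerColor k N hk hN s(x, y)).1 = (max x.1 y.1 - 3) / 2 := rfl

/-- Fewer than `2k + 4` vertices do not suffice. -/
lemma not_ramseyProp {k N : ℕ} (hk : 1 ≤ k) (hN : N < 2 * k + 4) :
    ¬ GallaiRamseyProp (fun _ : Fin k =>
      (⟨6, SimpleGraph.cycleGraph 6⟩ : Σ V : ℕ, SimpleGraph (Fin V))) N := by
  intro h
  obtain ⟨i, f, hf, hc⟩ := h (layerColor k N hk hN) (by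
    intro x y z _ _ _
    simp only [Fin.ext_iff, layerColor_val]
    omega)
  have ne : ∀ a b : Fin 6, a ≠ b → (f a).1 ≠ (f b).1 := fun a b hab e => hab (hf (Fin.ext e))
  have hc' : ∀ a b : Fin 6, (SimpleGraph.cycleGraph 6).Adj a b →
      (max (f a).1 (f b).1 - 3) / 2 = i.1 := fun a b hab => by
    rw [← layerColor_val hk hN, hc a b hab]
  -- three disjoint edges of the cycle
  have e1 := hc' 0 1 (by decide)
  have e2 := hc' 2 3 (by decide)
  have e3 := hc' 4 5 (by decide)
  by_cases hi : i.1 = 0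
  · have hlt : ∀ a : Fin 6, (f a).1 < 5 := by
      intro a
      fin_cases a <;> simp <;> omega
    have := Fintype.card_le_of_injective (fun a : Fin 6 => (⟨(f a).1, hlt a⟩ : Fin 5))
      fun a b hab => hf (Fin.ext (by simpa using hab))
    simp at this
  · have mne : ∀ a b p q : Fin 6, a ≠ p → a ≠ q → b ≠ p → b ≠ q →
        max (f a).1 (f b).1 ≠ max (f p).1 (f q).1 := by
      intro a b p q h1 h2 h3 h4
      have := ne a p h1
      have := ne a q h2
      have := ne b p h3
      have := ne b q h4
      omega
    have m1 := mne 0 1 2 3 (by decide) (by decide) (by decide) (by decide)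
    have m2 := mne 0 1 4 5 (by decide) (by decide) (by decide) (by decide)
    have m3 := mne 2 3 4 5 (by decide) (by decide) (by decide) (by decide)
    -- three distinct larger endpoints among the two values `2 * i + 3` and `2 * i + 4`
    clear mne ne hc' hc
    generalize max (f 0).1 (f 1).1 = a at *
    generalize max (f 2).1 (f 3).1 = b at *
    generalize max (f 4).1 (f 5).1 = d at *
    omega

end GallaiC6

/-- GR_k(C₆) = 2k + 4. -/
theorem stmt_5 (k : ℕ) (hk : 1 ≤ k) :
    IsLeast {N | 0 < N ∧
      GallaiRamseyProp (fun _ : Fin k => (⟨6, SimpleGraph.cycleGraph 6⟩ : Σ V : ℕ, SimpleGraph (Fin V))) N} (2 * k + 4) := by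
  refine ⟨⟨by omega, GallaiC6.ramseyProp_of_eq k⟩, fun N hN => ?_⟩
  by_contra! h
  exact GallaiC6.not_ramseyProp hk h hN.2
end

section
/- For every integer k ≥ 1, GR_k(P_6) = 2k + 4. -/
namespace GallaiP6

variable {V K : Type*}

/-! ### Monochromatic paths and two-coloured cliques -/

/-- The vertex set `S` contains a path on four vertices with all edges of colour `i`. The colouring is
a function of ordered pairs, symmetric in all uses; its values on the diagonal are irrelevant. -/
def HasP4 (c : V → V → K) (S : Finset V) (i : K) : Prop :=
  ∃ a₁ a₂ a₃ a₄ : V, [a₁, a₂, a₃, a₄].Nodup ∧ (∀ a ∈ [a₁, a₂, a₃, a₄], a ∈ S) ∧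
    c a₁ a₂ = i ∧ c a₂ a₃ = i ∧ c a₃ a₄ = i

/-- The vertex set `S` contains a path on five vertices with all edges of colour `i`. -/
def HasP5 (c : V → V → K) (S : Finset V) (i : K) : Prop :=
  ∃ a₁ a₂ a₃ a₄ a₅ : V, [a₁, a₂, a₃, a₄, a₅].Nodup ∧ (∀ a ∈ [a₁, a₂, a₃, a₄, a₅], a ∈ S) ∧
    c a₁ a₂ = i ∧ c a₂ a₃ = i ∧ c a₃ a₄ = i ∧ c a₄ a₅ = i

/-- The vertex set `S` contains a path on six vertices with all edges of colour `i`. -/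
def HasP6 (c : V → V → K) (S : Finset V) (i : K) : Prop :=
  ∃ a₁ a₂ a₃ a₄ a₅ a₆ : V, [a₁, a₂, a₃, a₄, a₅, a₆].Nodup ∧
    (∀ a ∈ [a₁, a₂, a₃, a₄, a₅, a₆], a ∈ S) ∧
    c a₁ a₂ = i ∧ c a₂ a₃ = i ∧ c a₃ a₄ = i ∧ c a₄ a₅ = i ∧ c a₅ a₆ = i

theorem exists_fresh (S : Finset V) (l : List V) (h : l.length < S.card) :
    ∃ x ∈ S, x ∉ l := by
  classical
  by_contra! hc
  have h1 : S ⊆ l.toFinset := fun x hx => by simpa using hc x hx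
  have := Finset.card_le_card h1
  have := l.toFinset_card_le
  omega

/-- A complete graph on at least six vertices minus a matching contains a `P₆`: hypothesis `hM` says
that no vertex has two incident edges of a colour other than `i`. -/
theorem p6_of_almost_complete {c : V → V → K} (hs : ∀ x y, c x y = c y x) {S : Finset V} {i : K}
    (hS : 6 ≤ S.card)
    (hM : ∀ x ∈ S, ∀ y ∈ S, ∀ z ∈ S, x ≠ y → x ≠ z → y ≠ z → c x y = i ∨ c x z = i) :
    HasP6 c S i := by
  -- a path can be extended greedily as long as two vertices are left over
  have step : ∀ (x : V) (l : List V), x ∈ S → x ∈ l → l.length + 2 ≤ S.card →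
      ∃ y ∈ S, y ∉ l ∧ c x y = i := by
    intro x l hx hxl hl
    obtain ⟨y, hy, hyl⟩ := exists_fresh S l (by omega)
    obtain ⟨z, hz, hzl⟩ := exists_fresh S (y :: l) (by simp; omega)
    have hzy : z ≠ y := fun h => hzl (by simp [h])
    have hzl' : z ∉ l := fun h => hzl (by simp [h])
    rcases hM x hx y hy z hz (fun h => hyl (h ▸ hxl)) (fun h => hzl' (h ▸ hxl)) hzy.symm with h | h
    · exact ⟨y, hy, hyl, h⟩
    · exact ⟨z, hz, hzl', h⟩
  obtain ⟨a, ha, -⟩ := exists_fresh S [] (by rw [List.length_nil]; omega)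
  obtain ⟨b, hb, hbl, hab⟩ := step a [a] ha (by simp) (by simp; omega)
  obtain ⟨d, hd, hdl, hbd⟩ := step b [b, a] hb (by simp) (by simp; omega)
  obtain ⟨e, he, hel, hde⟩ := step d [d, b, a] hd (by simp) (by simp; omega)
  obtain ⟨f, hf, hfl, hef⟩ := step e [e, d, b, a] he (by simp) (by simp; omega)
  obtain ⟨g, hg, hgl⟩ := exists_fresh S [f, e, d, b, a] (by simp; omega)
  simp only [List.mem_cons, List.not_mem_nil, or_false, not_or] at hbl hdl hel hfl hgl
  by_cases hfg : c f g = i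
  · exact ⟨a, b, d, e, f, g, by simp; grind, by simp; grind, hab, hbd, hde, hef, hfg⟩
  -- the last vertex `g` misses `f`, so it sees the first vertex `a`
  · have hga : c g a = i := by
      rcases hM g hg a ha f hf (by tauto) (by tauto) (by tauto) with h | h
      · exact h
      · exact absurd (hs f g ▸ h) hfg
    exact ⟨g, a, b, d, e, f, by simp; grind, by simp; grind, hga, hab, hbd, hde, hef⟩

/-- With two colours on eight vertices, a red `P₅` forces a `P₆`. Its ends are blue to the three
remaining vertices, and any two of these are the ends of a blue `P₅`; so they are red to the interior
of the red path, which makes the red path extendable. -/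
theorem false_of_p5 {c : V → V → K} (hs : ∀ x y, c x y = c y x) {S : Finset V} {r b : K}
    (hS : 8 ≤ S.card) (hc : ∀ x ∈ S, ∀ y ∈ S, x ≠ y → c x y = r ∨ c x y = b)
    (hr : ¬ HasP6 c S r) (hb : ¬ HasP6 c S b) (h5 : HasP5 c S r) : False := by
  obtain ⟨v₁, v₂, v₃, v₄, v₅, hn, hm, h12, h23, h34, h45⟩ := h5
  obtain ⟨x, hx, hxl⟩ := exists_fresh S [v₁, v₂, v₃, v₄, v₅] (by simp; omega)
  obtain ⟨y, hy, hyl⟩ := exists_fresh S [x, v₁, v₂, v₃, v₄, v₅] (by simp; omega)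
  obtain ⟨z, hz, hzl⟩ := exists_fresh S [y, x, v₁, v₂, v₃, v₄, v₅] (by simp; omega)
  simp only [List.mem_cons, List.not_mem_nil, or_false, not_or, List.nodup_cons, List.nodup_nil,
    forall_eq_or_imp, forall_eq, and_true, not_false_eq_true] at hn hm hxl hyl hzl
  -- the ends of the red path are blue to the outside
  have e1 : ∀ t ∈ S, t ∉ [v₁, v₂, v₃, v₄, v₅] → c v₁ t = b ∧ c v₅ t = b := by
    intro t ht htl
    simp only [List.mem_cons, List.not_mem_nil, or_false, not_or] at htl
    constructor
    · refine (hc v₁ (by tauto) t ht (by tauto)).resolve_left fun h => hr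
        ⟨t, v₁, v₂, v₃, v₄, v₅, by simp; grind, by simp; grind, by rw [hs, h], h12, h23, h34, h45⟩
    · refine (hc v₅ (by tauto) t ht (by tauto)).resolve_left fun h => hr
        ⟨v₁, v₂, v₃, v₄, v₅, t, by simp; grind, by simp; grind, h12, h23, h34, h45, h⟩
  -- an outside vertex is the end of a blue path through `v₁` and `v₅`, so it is red to the interior
  have e2 : ∀ t ∈ S, ∀ t' ∈ S, ∀ t'' ∈ S, t ∉ [v₁, v₂, v₃, v₄, v₅] → t' ∉ [v₁, v₂, v₃, v₄, v₅] →
      t'' ∉ [v₁, v₂, v₃, v₄, v₅] → t ≠ t' → t ≠ t'' → t' ≠ t'' →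
      ∀ p ∈ [v₂, v₃, v₄], c p t = r := by
    intro t ht t' ht' t'' ht'' n n' n'' m1 m2 m3 p hp
    have f := e1 t ht n
    have f' := e1 t' ht' n'
    have f'' := e1 t'' ht'' n''
    simp only [List.mem_cons, List.not_mem_nil, or_false, not_or] at n n' n'' hp
    have hpS : p ∈ S := by grind
    refine (hc p hpS t ht (by grind)).resolve_right fun h => hb
      ⟨p, t, v₁, t', v₅, t'', by simp; grind, by simp; grind, h, by rw [hs]; tauto, by tauto,
        by rw [hs]; tauto, by tauto⟩
  have ex := e2 x hx y hy z hz (by simp; tauto) (by simp; tauto) (by simp; tauto)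
    (by grind) (by grind) (by grind)
  have ey := e2 y hy x hx z hz (by simp; tauto) (by simp; tauto) (by simp; tauto)
    (by grind) (by grind) (by grind)
  exact hr ⟨v₁, v₂, x, v₃, y, v₄, by simp; grind, by simp; grind, h12, ex v₂ (by simp),
    by rw [hs]; exact ex v₃ (by simp), ey v₃ (by simp), by rw [hs]; exact ey v₄ (by simp)⟩

/-- If `p` and `q` are blue to everything outside a small set `l`, then `x, p, y, q, z` with
`x, y, z` outside `l` is a blue `P₅`. -/
theorem p5_of_blue_ends {c : V → V → K} (hs : ∀ x y, c x y = c y x) {S : Finset V} {b : K}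
    {p q : V} (l : List V) (hp : p ∈ S) (hq : q ∈ S) (hpq : p ≠ q) (hpl : p ∈ l) (hql : q ∈ l)
    (hl : l.length + 3 ≤ S.card) (h : ∀ t ∈ S, t ∉ l → c p t = b ∧ c q t = b) :
    HasP5 c S b := by
  obtain ⟨x, hx, hxl⟩ := exists_fresh S l (by omega)
  obtain ⟨y, hy, hyl⟩ := exists_fresh S (x :: l) (by simp; omega)
  obtain ⟨z, hz, hzl⟩ := exists_fresh S (y :: x :: l) (by simp; omega)
  simp only [List.mem_cons, not_or] at hyl hzl
  have f1 := h x hx hxl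
  have f2 := h y hy hyl.2
  have f3 := h z hz hzl.2.2
  exact ⟨x, p, y, q, z, by simp; grind, by simp; grind, by rw [hs]; tauto, by tauto,
    by rw [hs]; tauto, by tauto⟩

/-- A longest red path with four vertices gives a blue `P₅`, so this reduces to `false_of_p5`. -/
theorem false_of_p4 {c : V → V → K} (hs : ∀ x y, c x y = c y x) {S : Finset V} {r b : K}
    (hS : 8 ≤ S.card) (hc : ∀ x ∈ S, ∀ y ∈ S, x ≠ y → c x y = r ∨ c x y = b)
    (hr : ¬ HasP6 c S r) (hb : ¬ HasP6 c S b) (h4 : HasP4 c S r) : False := by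
  have hr5 : ¬ HasP5 c S r := fun h => false_of_p5 hs hS hc hr hb h
  have hb5 : ¬ HasP5 c S b := fun h =>
    false_of_p5 hs hS (fun x hx y hy n => (hc x hx y hy n).symm) hb hr h
  obtain ⟨v₁, v₂, v₃, v₄, hn, hm, h12, h23, h34⟩ := h4
  simp only [List.mem_cons, List.not_mem_nil, or_false, not_or, List.nodup_cons, List.nodup_nil,
    forall_eq_or_imp, forall_eq, and_true, not_false_eq_true] at hn hm
  refine hb5 (p5_of_blue_ends hs (p := v₁) (q := v₄) [v₁, v₂, v₃, v₄] (by tauto) (by tauto)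
    (by tauto) (by simp) (by simp) (by simp; omega) fun t ht htl => ?_)
  simp only [List.mem_cons, List.not_mem_nil, or_false, not_or] at htl
  constructor
  · refine (hc v₁ (by tauto) t ht (by tauto)).resolve_left fun h => hr5
      ⟨t, v₁, v₂, v₃, v₄, by simp; grind, by simp; grind, by rw [hs, h], h12, h23, h34⟩
  · refine (hc v₄ (by tauto) t ht (by tauto)).resolve_left fun h => hr5
      ⟨v₁, v₂, v₃, v₄, t, by simp; grind, by simp; grind, h12, h23, h34, h⟩

/-- The Ramsey bound `R(P₆, P₆) ≤ 8`. -/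
theorem false_of_two_colors {c : V → V → K} (hs : ∀ x y, c x y = c y x) {S : Finset V} {r b : K}
    (hS : 8 ≤ S.card) (hc : ∀ x ∈ S, ∀ y ∈ S, x ≠ y → c x y = r ∨ c x y = b)
    (hr : ¬ HasP6 c S r) (hb : ¬ HasP6 c S b) : False := by
  have hc' : ∀ x ∈ S, ∀ y ∈ S, x ≠ y → c x y = b ∨ c x y = r :=
    fun x hx y hy n => (hc x hx y hy n).symm
  have hr4 : ¬ HasP4 c S r := fun h => false_of_p4 hs hS hc hr hb h
  have hb5 : ¬ HasP5 c S b := fun h => false_of_p5 hs hS hc' hb hr h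
  by_cases h3 : ∃ v₁ ∈ S, ∃ v₂ ∈ S, ∃ v₃ ∈ S, [v₁, v₂, v₃].Nodup ∧ c v₁ v₂ = r ∧ c v₂ v₃ = r
  · obtain ⟨v₁, h1, v₂, h2, v₃, h3, hn, h12, h23⟩ := h3
    simp only [List.mem_cons, List.not_mem_nil, or_false, not_or, List.nodup_cons, List.nodup_nil,
      and_true, not_false_eq_true] at hn
    refine hb5 (p5_of_blue_ends hs (p := v₁) (q := v₃) [v₁, v₂, v₃] (by tauto) (by tauto)
      (by tauto) (by simp) (by simp) (by simp; omega) fun t ht htl => ?_)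
    simp only [List.mem_cons, List.not_mem_nil, or_false, not_or] at htl
    constructor
    · refine (hc v₁ (by tauto) t ht (by tauto)).resolve_left fun h => hr4
        ⟨t, v₁, v₂, v₃, by simp; grind, by simp; grind, by rw [hs, h], h12, h23⟩
    · refine (hc v₃ (by tauto) t ht (by tauto)).resolve_left fun h => hr4
        ⟨v₁, v₂, v₃, t, by simp; grind, by simp; grind, h12, h23, h⟩
  · -- without a red path on three vertices the red edges form a matching
    refine hb (p6_of_almost_complete hs (by omega) fun x hx y hy z hz hxy hxz hyz => ?_)
    by_contra! hcon
    exact h3 ⟨y, hy, x, hx, z, hz, by simp; grind, by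
      rw [hs]; exact (hc x hx y hy hxy).resolve_right hcon.1,
      (hc x hx z hz hxz).resolve_right hcon.2⟩


/-! ### Two colours and a matching of twins -/

theorem HasP6.mono {c : V → V → K} {S T : Finset V} {i : K} (hST : S ⊆ T) (h : HasP6 c S i) :
    HasP6 c T i := by
  obtain ⟨a₁, a₂, a₃, a₄, a₅, a₆, hn, hm, h⟩ := h
  exact ⟨a₁, a₂, a₃, a₄, a₅, a₆, hn, fun a ha => hST (hm a ha), h⟩

/-- Let `R` and `B` be sets of common red and blue neighbours of the twins `u`, `v`, with `R` of size
at least four. Alternating between `R` and `{u, v}` shows that no red edge has an end in `R` apart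
from those to `u` and `v`. So `R` is a blue clique up to a matching, completely blue to `B`, and
contains or yields a blue `P₆`. In `hO`, the third alternative describes the edges of the matching:
their ends are twins with respect to the colours `r` and `b`. -/
theorem false_of_twins_aux {c : V → V → K} (hs : ∀ x y, c x y = c y x) {S : Finset V} {r b : K}
    (hrb : r ≠ b)
    (hO : ∀ x ∈ S, ∀ y ∈ S, x ≠ y → c x y = r ∨ c x y = b ∨
      ∀ w ∈ S, w ≠ x → w ≠ y → c w x = c w y ∧ (c w x = r ∨ c w x = b))
    (hr : ¬ HasP6 c S r) (hb : ¬ HasP6 c S b) {u v : V} (hu : u ∈ S) (hv : v ∈ S) (huv : u ≠ v)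
    {R B : Finset V} (hR4 : 4 ≤ R.card) (hRB : 7 ≤ R.card + B.card)
    (hR : ∀ x ∈ R, x ∈ S ∧ x ≠ u ∧ x ≠ v ∧ c x u = r ∧ c x v = r)
    (hB : ∀ x ∈ B, x ∈ S ∧ x ≠ u ∧ x ≠ v ∧ c x u = b ∧ c x v = b) : False := by
  -- otherwise `y, x, u, z, v, t` is a red `P₆`
  have key : ∀ x ∈ R, ∀ y ∈ S, y ≠ u → y ≠ v → x ≠ y → c x y ≠ r := by
    intro x hx y hy hyu hyv hxy h
    obtain ⟨z, hz, hzl⟩ := exists_fresh R [x, y] (by simp; omega)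
    obtain ⟨t, ht, htl⟩ := exists_fresh R [x, y, z] (by simp; omega)
    simp only [List.mem_cons, List.not_mem_nil, or_false, not_or] at hzl htl
    have := hR x hx
    have := hR z hz
    have := hR t ht
    exact hr ⟨y, x, u, z, v, t, by simp; grind, by simp; grind, by rw [hs, h], by tauto,
      by rw [hs]; tauto, by tauto, by rw [hs]; tauto⟩
  have keyR : ∀ x ∈ R, ∀ y ∈ R, x ≠ y → c x y ≠ r := fun x hx y hy n =>
    key x hx y (hR y hy).1 (hR y hy).2.1 (hR y hy).2.2.1 n
  have hM : ∀ x ∈ R, ∀ y ∈ R, ∀ z ∈ R, x ≠ y → x ≠ z → y ≠ z → c x y = b ∨ c x z = b := by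
    intro x hx y hy z hz hxy hxz hyz
    rcases hO x (hR x hx).1 y (hR y hy).1 hxy with h | h | h
    · exact absurd h (keyR x hx y hy hxy)
    · exact Or.inl h
    · right
      rw [hs]
      exact (h z (hR z hz).1 hxz.symm hyz.symm).2.resolve_left (keyR z hz x hx hxz.symm)
  have hRBb : ∀ x ∈ R, ∀ y ∈ B, c x y = b := by
    intro x hx y hy
    have h1 := hR x hx
    have h2 := hB y hy
    have hxy : x ≠ y := by
      rintro rfl
      exact hrb (h1.2.2.2.1.symm.trans h2.2.2.2.1)
    rcases hO x h1.1 y h2.1 hxy with h | h | h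
    · exact absurd h (key x hx y h2.1 h2.2.1 h2.2.2.1 hxy)
    · exact h
    -- twins `x`, `y` would see `u` in the same colour
    · have := (h u hu h1.2.1.symm h2.2.1.symm).1
      rw [hs u x, hs u y, h1.2.2.2.1, h2.2.2.2.1] at this
      exact absurd this hrb
  have hRS : R ⊆ S := fun x hx => (hR x hx).1
  by_cases hB2 : 2 ≤ B.card
  · obtain ⟨p, hp, q, hq, hpq⟩ := Finset.one_lt_card.1 hB2
    obtain ⟨x, hx, y, hy, z, hz, hxy, hxz, hyz, h⟩ : ∃ x ∈ R, ∃ y ∈ R, ∃ z ∈ R,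
        x ≠ y ∧ x ≠ z ∧ y ≠ z ∧ c y z = b := by
      obtain ⟨x, hx, y, hy, z, hz, hxy, hxz, hyz⟩ := Finset.two_lt_card.1 (show 2 < R.card by omega)
      rcases hM x hx y hy z hz hxy hxz hyz with h | h
      · exact ⟨z, hz, x, hx, y, hy, hxz.symm, hyz.symm, hxy, h⟩
      · exact ⟨y, hy, x, hx, z, hz, hxy.symm, hyz, hxz, h⟩
    have := hR x hx
    have := hR y hy
    have := hR z hz
    have := hB p hp
    have := hB q hq
    have d : ∀ s ∈ R, ∀ t ∈ B, s ≠ t := by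
      rintro s h1 t h2 rfl
      exact hrb ((hR s h1).2.2.2.1.symm.trans (hB s h2).2.2.2.1)
    have d1 := d x hx p hp
    have d2 := d x hx q hq
    have d3 := d y hy p hp
    have d4 := d y hy q hq
    have d5 := d z hz p hp
    have d6 := d z hz q hq
    exact hb ⟨u, p, x, q, y, z, by simp; grind, by simp; grind, by rw [hs]; tauto,
      by rw [hs, hRBb x hx p hp], hRBb x hx q hq, by rw [hs, hRBb y hy q hq], h⟩
  · exact hb ((p6_of_almost_complete hs (by omega) hM).mono hRS)

/-- Two colours together with a nonempty matching of twins on nine vertices force a `P₆`: one of the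
two common neighbourhoods of a pair of twins has at least four of the other seven vertices. -/
theorem false_of_twins {c : V → V → K} (hs : ∀ x y, c x y = c y x) {S : Finset V} {r b : K}
    (hrb : r ≠ b) (hS : 9 ≤ S.card)
    (hO : ∀ x ∈ S, ∀ y ∈ S, x ≠ y → c x y = r ∨ c x y = b ∨
      ∀ w ∈ S, w ≠ x → w ≠ y → c w x = c w y ∧ (c w x = r ∨ c w x = b))
    (hr : ¬ HasP6 c S r) (hb : ¬ HasP6 c S b) {u v : V} (hu : u ∈ S) (hv : v ∈ S) (huv : u ≠ v)
    (h : ∀ w ∈ S, w ≠ u → w ≠ v → c w u = c w v ∧ (c w u = r ∨ c w u = b)) : False := by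
  classical
  set T := S \ {u, v} with hT
  set R := T.filter fun w => c w u = r with hRdef
  set B := T.filter fun w => ¬ c w u = r with hBdef
  have hTc : 7 ≤ T.card := by
    have h1 : S.card - ({u, v} : Finset V).card ≤ T.card := Finset.le_card_sdiff {u, v} S
    have h2 : ({u, v} : Finset V).card ≤ 2 := Finset.card_le_two
    omega
  have hsum : R.card + B.card = T.card := Finset.card_filter_add_card_filter_not _
  have hR : ∀ x ∈ R, x ∈ S ∧ x ≠ u ∧ x ≠ v ∧ c x u = r ∧ c x v = r := by
    intro x hx
    simp only [hRdef, hT, Finset.mem_filter, Finset.mem_sdiff, Finset.mem_insert,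
      Finset.mem_singleton, not_or] at hx
    have := h x hx.1.1 hx.1.2.1 hx.1.2.2
    exact ⟨hx.1.1, hx.1.2.1, hx.1.2.2, hx.2, this.1 ▸ hx.2⟩
  have hB : ∀ x ∈ B, x ∈ S ∧ x ≠ u ∧ x ≠ v ∧ c x u = b ∧ c x v = b := by
    intro x hx
    simp only [hBdef, hT, Finset.mem_filter, Finset.mem_sdiff, Finset.mem_insert,
      Finset.mem_singleton, not_or] at hx
    have := h x hx.1.1 hx.1.2.1 hx.1.2.2
    have hxb := this.2.resolve_left hx.2
    exact ⟨hx.1.1, hx.1.2.1, hx.1.2.2, hxb, this.1 ▸ hxb⟩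
  by_cases h4 : 4 ≤ R.card
  · exact false_of_twins_aux hs hrb hO hr hb hu hv huv h4 (by omega) hR hB
  · refine false_of_twins_aux hs hrb.symm (fun x hx y hy n => ?_) hb hr hu hv huv
      (R := B) (B := R) (by omega) (by omega) hB hR
    rcases hO x hx y hy n with h | h | h
    · exact Or.inr (Or.inl h)
    · exact Or.inl h
    · exact Or.inr (Or.inr fun w hw h1 h2 => ⟨(h w hw h1 h2).1, (h w hw h1 h2).2.symm⟩)

/-! ### Connected colours -/

/-- No triangle has three distinct colours: the Gallai condition. -/
def NoRainbow (c : V → V → K) : Prop :=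
  ∀ x y z : V, x ≠ y → y ≠ z → x ≠ z → c x y = c y z ∨ c y z = c x z ∨ c x y = c x z

/-- The graph of colour `i` on `S` is connected, stated through cuts: every nonempty proper subset of
`S` is left by an edge of colour `i`. -/
def Conn (c : V → V → K) (S : Finset V) (i : K) : Prop :=
  ∀ A ⊆ S, A.Nonempty → A ≠ S → ∃ u ∈ A, ∃ v ∈ S, v ∉ A ∧ c u v = i

/-- `Reach c S i x y`: there is a walk of colour `i` inside `S` from `x` to `y`. The vertices reachable
from `x ∈ S` form its connected component. -/
def Reach (c : V → V → K) (S : Finset V) (i : K) : V → V → Prop :=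
  Relation.ReflTransGen fun x y => x ∈ S ∧ y ∈ S ∧ c x y = i

theorem Reach.symm {c : V → V → K} (hs : ∀ x y, c x y = c y x) {S : Finset V} {i : K} {x y : V}
    (h : Reach c S i x y) : Reach c S i y x := by
  -- found by instance search in the next step
  have : Std.Symm (fun x y => x ∈ S ∧ y ∈ S ∧ c x y = i) :=
    ⟨fun a b h => ⟨h.2.1, h.1, by rw [hs]; exact h.2.2⟩⟩
  exact Relation.ReflTransGen.stdSymm.symm _ _ h

/-- A vertex outside a component of colour `i` sees the whole component in a single colour. -/
theorem Reach.const {c : V → V → K} (hs : ∀ x y, c x y = c y x) (hg : NoRainbow c)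
    {S : Finset V} {i : K} {x y w : V} (h : Reach c S i x y) (hw : w ∈ S)
    (hxw : ¬ Reach c S i x w) : c w y = c w x := by
  induction h with
  | refl => rfl
  | @tail y z hxy hyz ih =>
    have hxz : Reach c S i x z := Relation.ReflTransGen.tail hxy hyz
    rw [← ih]
    have h1 : c w y ≠ i := fun h => hxw (Relation.ReflTransGen.tail hxy ⟨hyz.1, hw, by rw [hs, h]⟩)
    have h2 : c w z ≠ i := fun h => hxw (Relation.ReflTransGen.tail hxz ⟨hyz.2.1, hw, by rw [hs, h]⟩)
    have hwy : w ≠ y := by rintro rfl; exact hxw hxy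
    have hwz : w ≠ z := by rintro rfl; exact hxw hxz
    by_cases hyz' : y = z
    · rw [hyz']
    · have := hg w y z hwy hyz' hwz
      have := hyz.2.2
      grind

/-- If colour `i` is disconnected, then no component is all of `S`. -/
theorem exists_not_reach {c : V → V → K} (hs : ∀ x y, c x y = c y x) {S : Finset V} {i : K}
    (h : ¬ Conn c S i) (x : V) : ∃ w ∈ S, ¬ Reach c S i x w := by
  simp only [Conn, not_forall, not_exists, not_and] at h
  obtain ⟨A, hAS, ⟨a, ha⟩, hne, hA⟩ := h
  obtain ⟨b, hb, hbA⟩ : ∃ b ∈ S, b ∉ A := by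
    by_contra! hc
    exact hne (hAS.antisymm hc)
  have closed : ∀ y, Reach c S i a y → y ∈ A := by
    intro y hy
    induction hy with
    | refl => exact ha
    | tail _ hyz ih =>
      by_contra hz
      exact hA _ ih _ hyz.2.1 hz hyz.2.2
  by_contra! hc
  exact hbA (closed b (((hc a (hAS ha)).symm hs).trans (hc b hb)))

/-- The inductive step of `conn_three`. If `i` is disconnected on `S \ {v}`, then `v` has an edge of
colour `i` to each of its components there. A neighbour `x` of `v` in another colour `m` then sees
all the other components in colour `m` (`hout`). Taking `m = j` and `m = l` gives two
incompatible colours between some pair of components. -/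
theorem conn_three_aux {c : V → V → K} (hs : ∀ x y, c x y = c y x) (hg : NoRainbow c)
    [DecidableEq V] {S : Finset V} {i j l : K} (hij : i ≠ j) (hil : i ≠ l) (hjl : j ≠ l) {v : V}
    (hv : v ∈ S) (hS : 2 ≤ S.card) (h1 : Conn c S i) (h2 : Conn c S j) (h3 : Conn c S l)
    (hn : ¬ Conn c (S.erase v) i) : False := by
  classical
  have hsing : ({v} : Finset V) ≠ S := by rintro h; rw [← h] at hS; simp at hS
  -- `v` sends an edge of every connected colour into the rest
  have hnbr : ∀ m, Conn c S m → ∃ x ∈ S.erase v, c v x = m := by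
    intro m hm
    obtain ⟨u, hu, x, hx, hxv, h⟩ := hm {v} (by simpa using hv) (by simp) hsing
    simp only [Finset.mem_singleton] at hu hxv
    exact ⟨x, by simp [hx, hxv], hu ▸ h⟩
  -- `v` sends an edge of colour `i` to every component of colour `i` of the rest
  have hcomp : ∀ y ∈ S.erase v, ∃ z ∈ S.erase v, Reach c (S.erase v) i y z ∧ c v z = i := by
    intro y hy
    have hvA : v ∉ (S.erase v).filter fun z => Reach c (S.erase v) i y z := by simp
    obtain ⟨z, hz, t, ht, htA, h⟩ := h1 ((S.erase v).filter fun z => Reach c (S.erase v) i y z)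
      (fun z hz => Finset.mem_of_mem_erase (Finset.mem_filter.1 hz).1)
      ⟨y, Finset.mem_filter.2 ⟨hy, Relation.ReflTransGen.refl⟩⟩
      (fun h => hvA (h.symm.subset hv))
    rw [Finset.mem_filter] at hz
    have htv : t = v := by
      by_contra htv
      have : t ∈ S.erase v := Finset.mem_erase.2 ⟨htv, ht⟩
      exact htA (Finset.mem_filter.2 ⟨this, Relation.ReflTransGen.tail hz.2 ⟨hz.1, this, h⟩⟩)
    exact ⟨z, hz.1, hz.2, by rw [hs, ← htv, h]⟩
  have hout : ∀ m, m ≠ i → ∀ x ∈ S.erase v, c v x = m → ∀ y ∈ S.erase v,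
      ¬ Reach c (S.erase v) i x y → c x y = m := by
    intro m hm x hx hvx y hy hxy
    obtain ⟨z, hz, hyz, hvz⟩ := hcomp y hy
    have hxz : ¬ Reach c (S.erase v) i x z := fun h => hxy (h.trans (hyz.symm hs))
    have hyx : ¬ Reach c (S.erase v) i y x := fun h => hxy (h.symm hs)
    rw [← hyz.const hs hg hx hyx]
    have hxzi : c x z ≠ i := fun h => hxz (Relation.ReflTransGen.single ⟨hx, hz, h⟩)
    have hne : x ≠ z := by rintro rfl; exact hxz Relation.ReflTransGen.refl
    have := hg v x z (Finset.ne_of_mem_erase hx).symm hne (Finset.ne_of_mem_erase hz).symm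
    grind
  obtain ⟨x, hx, hvx⟩ := hnbr j h2
  obtain ⟨y, hy, hvy⟩ := hnbr l h3
  by_cases hxy : Reach c (S.erase v) i x y
  · obtain ⟨w, hw, hxw⟩ := exists_not_reach hs hn x
    have e1 := hout j hij.symm x hx hvx w hw hxw
    have e2 := hout l hil.symm y hy hvy w hw fun h => hxw (hxy.trans h)
    have e3 := hxy.const hs hg hw hxw
    rw [hs w y, hs w x, e1, e2] at e3
    exact hjl e3.symm
  · have e1 := hout j hij.symm x hx hvx y hy hxy
    have e2 := hout l hil.symm y hy hvy x hx fun h => hxy (h.symm hs)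
    rw [hs, e1] at e2
    exact hjl e2

/-- At most two colours of a Gallai coloring are connected. -/
theorem conn_three {c : V → V → K} (hs : ∀ x y, c x y = c y x) (hg : NoRainbow c)
    {i j l : K} (hij : i ≠ j) (hil : i ≠ l) (hjl : j ≠ l) (S : Finset V) (hS : 2 ≤ S.card)
    (h1 : Conn c S i) (h2 : Conn c S j) (h3 : Conn c S l) : False := by
  classical
  induction S using Finset.strongInduction with
  | H S ih =>
    obtain ⟨v, hv⟩ : S.Nonempty := Finset.card_pos.1 (by omega)
    have hcard := Finset.card_erase_of_mem hv
    by_cases hT : 2 ≤ (S.erase v).card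
    · by_cases k1 : Conn c (S.erase v) i
      · by_cases k2 : Conn c (S.erase v) j
        · by_cases k3 : Conn c (S.erase v) l
          · exact ih _ (Finset.erase_ssubset hv) hT k1 k2 k3
          · exact conn_three_aux hs hg hil.symm hjl.symm hij hv hS h3 h1 h2 k3
        · exact conn_three_aux hs hg hij.symm hjl hil hv hS h2 h1 h3 k2
      · exact conn_three_aux hs hg hij hil hjl hv hS h1 h2 h3 k1
    · -- on two vertices there is only one edge
      obtain ⟨t, ht⟩ := Finset.card_eq_one.1 (show (S.erase v).card = 1 by omega)
      have hsing : ({v} : Finset V) ≠ S := by rintro h; rw [← h] at hS; simp at hS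
      have e : ∀ m, Conn c S m → c v t = m := by
        intro m hm
        obtain ⟨u, hu, x, hx, hxv, h⟩ := hm {v} (by simpa using hv) (by simp) hsing
        simp only [Finset.mem_singleton] at hu hxv
        have : x ∈ S.erase v := by simp [hx, hxv]
        rw [ht, Finset.mem_singleton] at this
        rw [← hu, ← this, h]
      exact hij ((e i h1).symm.trans (e j h2))

/-! ### The weighted induction -/

/-- `S` satisfies the restrictions given by the weights `w` (at most `2` each), where weights `0`, `1`
and `2` forbid an edge, a `P₄` and a `P₆` respectively, and yet has at least `∑ w i + 4` vertices. -/
def Avoids [Fintype K] (c : V → V → K) (S : Finset V) (w : K → ℕ) : Prop :=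
  (∀ i, w i ≤ 2) ∧ (∀ i, w i = 0 → ∀ x ∈ S, ∀ y ∈ S, x ≠ y → c x y ≠ i) ∧
  (∀ i, w i = 1 → ¬ HasP4 c S i) ∧ (∀ i, w i = 2 → ¬ HasP6 c S i) ∧ ∑ i, w i + 4 ≤ S.card

/-- Passing to a homogeneous set `H`: the weight of `i` is lowered by the number of vertices outside
`H` that see `H` in colour `i`. Such vertices extend paths inside `H`, so the new restrictions hold. -/
theorem Avoids.of_homogeneous [Fintype K] {c : V → V → K} (hs : ∀ x y, c x y = c y x)
    {S H : Finset V} {w : K → ℕ} (h : Avoids c S w) (hHS : H ⊆ S) (hH : 3 ≤ H.card)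
    (hom : ∀ x ∈ S, x ∉ H → ∀ y ∈ H, ∀ z ∈ H, c x y = c x z) : ∃ w', Avoids c H w' := by
  classical
  obtain ⟨hw2, h0, h1, h2, hcard⟩ := h
  obtain ⟨e, he⟩ : H.Nonempty := Finset.card_pos.1 (by omega)
  set D : K → Finset V := fun i => (S \ H).filter fun x => c x e = i with hD
  have hDmem : ∀ i, ∀ x ∈ D i, x ∈ S ∧ x ∉ H ∧ (∀ y ∈ H, c x y = i) ∧ ∀ y ∈ H, c y x = i := by
    intro i x hx
    simp only [hD, Finset.mem_filter, Finset.mem_sdiff] at hx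
    have : ∀ y ∈ H, c x y = i := fun y hy => (hom x hx.1.1 hx.1.2 y hy e he).trans hx.2
    exact ⟨hx.1.1, hx.1.2, this, fun y hy => by rw [hs, this y hy]⟩
  have hsum : (S \ H).card = ∑ i, (D i).card :=
    Finset.card_eq_sum_card_fiberwise (t := Finset.univ) (by simp)
  have hSH : (S \ H).card + H.card = S.card := Finset.card_sdiff_add_card_eq_card hHS
  -- more than `w i` vertices in `D i` would alternate with `H` in a forbidden path
  have hle : ∀ i, (D i).card ≤ w i := by
    intro i
    by_contra! hlt
    obtain ⟨x, hx, -⟩ := exists_fresh H [] (by rw [List.length_nil]; omega)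
    obtain ⟨y, hy, hyl⟩ := exists_fresh H [x] (by simp; omega)
    obtain ⟨z, hz, hzl⟩ := exists_fresh H [y, x] (by simp; omega)
    obtain ⟨a, ha, -⟩ := exists_fresh (D i) [] (by rw [List.length_nil]; omega)
    simp only [List.mem_cons, List.not_mem_nil, or_false, not_or] at hyl hzl
    have ha' := hDmem i a ha
    have := hw2 i
    interval_cases hwi : w i
    · exact h0 i hwi a ha'.1 x (hHS hx) (fun h => ha'.2.1 (h ▸ hx)) (ha'.2.2.1 x hx)
    · obtain ⟨b, hb, hbl⟩ := exists_fresh (D i) [a] (by simp; omega)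
      have hb' := hDmem i b hb
      simp only [List.mem_cons, List.not_mem_nil, or_false] at hbl
      exact h1 i hwi ⟨x, a, y, b, by simp; clear h0 h1 h2 hom hsum hw2 hDmem; grind, by simp; clear h0 h1 h2 hom hsum hw2 hDmem; grind, ha'.2.2.2 x hx,
        ha'.2.2.1 y hy, hb'.2.2.2 y hy⟩
    · obtain ⟨b, hb, hbl⟩ := exists_fresh (D i) [a] (by simp; omega)
      obtain ⟨d, hd, hdl⟩ := exists_fresh (D i) [b, a] (by simp; omega)
      have hb' := hDmem i b hb
      have hd' := hDmem i d hd
      simp only [List.mem_cons, List.not_mem_nil, or_false, not_or] at hbl hdl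
      exact h2 i hwi ⟨x, a, y, b, z, d, by simp; clear h0 h1 h2 hom hsum hw2 hDmem; grind, by simp; clear h0 h1 h2 hom hsum hw2 hDmem; grind, ha'.2.2.2 x hx,
        ha'.2.2.1 y hy, hb'.2.2.2 y hy, hb'.2.2.1 z hz, hd'.2.2.2 z hz⟩
  have hsum' : ∑ i, (w i - (D i).card) + ∑ i, (D i).card = ∑ i, w i := by
    rw [← Finset.sum_add_distrib]
    exact Finset.sum_congr rfl fun i _ => Nat.sub_add_cancel (hle i)
  have hcard' : ∑ i, (w i - (D i).card) + 4 ≤ H.card := by omega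
  have hone : ∀ i, w i - (D i).card ≤ ∑ i, (w i - (D i).card) := fun i =>
    Finset.single_le_sum (f := fun i => w i - (D i).card) (fun _ _ => Nat.zero_le _)
      (Finset.mem_univ i)
  refine ⟨fun i => w i - (D i).card, fun i => (Nat.sub_le _ _).trans (hw2 i), fun i hi => ?_,
    fun i hi => ?_, fun i hi hP => ?_, hcard'⟩
  -- an edge `uv` in `H` extends to a forbidden path through the `w i` vertices of `D i`
  · intro u hu v hv huv huvi
    have hwD : (D i).card = w i := le_antisymm (hle i) (by simp only at hi; omega)
    obtain ⟨x, hx, hxl⟩ := exists_fresh H [u, v] (by simp; omega)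
    obtain ⟨y, hy, hyl⟩ := exists_fresh H [x, u, v] (by simp; omega)
    simp only [List.mem_cons, List.not_mem_nil, or_false, not_or] at hxl hyl
    have := hw2 i
    interval_cases hwi : w i
    · exact h0 i hwi u (hHS hu) v (hHS hv) huv huvi
    · obtain ⟨a, ha, -⟩ := exists_fresh (D i) [] (by rw [List.length_nil]; omega)
      have ha' := hDmem i a ha
      exact h1 i hwi ⟨u, v, a, x, by simp; clear h0 h1 h2 hom hsum hw2 hDmem; grind, by simp; clear h0 h1 h2 hom hsum hw2 hDmem; grind, huvi, ha'.2.2.2 v hv,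
        ha'.2.2.1 x hx⟩
    · obtain ⟨a, ha, -⟩ := exists_fresh (D i) [] (by rw [List.length_nil]; omega)
      obtain ⟨b, hb, hbl⟩ := exists_fresh (D i) [a] (by simp; omega)
      have ha' := hDmem i a ha
      have hb' := hDmem i b hb
      simp only [List.mem_cons, List.not_mem_nil, or_false] at hbl
      exact h2 i hwi ⟨u, v, a, x, b, y, by simp; clear h0 h1 h2 hom hsum hw2 hDmem; grind, by simp; clear h0 h1 h2 hom hsum hw2 hDmem; grind, huvi, ha'.2.2.2 v hv,
        ha'.2.2.1 x hx, hb'.2.2.2 x hx, hb'.2.2.1 y hy⟩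
  -- a `P₄` in `H` extends to a `P₆` by a vertex of `D i` and a fifth vertex of `H`, which exists because
  -- the new weights have positive sum
  · rintro ⟨p, q, r, s, hn, hm, e1, e2, e3⟩
    have hi1 := hone i
    have := hw2 i
    have := hle i
    simp only at hi
    rcases Nat.lt_or_ge (w i) 2 with hlt | hge
    · exact h1 i (by omega) ⟨p, q, r, s, hn, fun a ha => hHS (hm a ha), e1, e2, e3⟩
    · obtain ⟨a, ha, -⟩ := exists_fresh (D i) [] (by rw [List.length_nil]; omega)
      have ha' := hDmem i a ha
      obtain ⟨x, hx, hxl⟩ := exists_fresh H [p, q, r, s] (by simp; omega)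
      simp only [List.mem_cons, List.not_mem_nil, or_false, not_or, List.nodup_cons,
        List.nodup_nil, forall_eq_or_imp, forall_eq, and_true, not_false_eq_true] at hn hm hxl
      exact h2 i (by omega) ⟨p, q, r, s, a, x, by simp; clear h0 h1 h2 hom hsum hw2 hDmem; grind, by simp; clear h0 h1 h2 hom hsum hw2 hDmem; grind, e1, e2, e3,
        ha'.2.2.2 s (by tauto), ha'.2.2.1 x hx⟩
  · simp only at hi
    have := hw2 i
    exact h2 i (by omega) (hP.mono hHS)

/-- In the absence of large proper homogeneous sets (`hom`), every edge of a disconnected colour is a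
component by itself, and its ends are twins. -/
theorem twins_of_not_conn {c : V → V → K} (hs : ∀ x y, c x y = c y x) (hg : NoRainbow c)
    {S : Finset V} (hom : ∀ H ⊆ S, H ≠ S → 3 ≤ H.card →
      ¬ ∀ x ∈ S, x ∉ H → ∀ y ∈ H, ∀ z ∈ H, c x y = c x z)
    {i : K} (hi : ¬ Conn c S i) {x y : V} (hx : x ∈ S) (hy : y ∈ S) (hxy : x ≠ y)
    (h : c x y = i) {w : V} (hw : w ∈ S) (hwx : w ≠ x) (hwy : w ≠ y) :
    c w x = c w y ∧ c w x ≠ i := by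
  classical
  obtain ⟨t, ht, hxt⟩ := exists_not_reach hs hi x
  have hRxy : Reach c S i x y := Relation.ReflTransGen.single ⟨hx, hy, h⟩
  have hxw : ¬ Reach c S i x w := by
    intro hxw
    refine hom (S.filter fun z => Reach c S i x z) (Finset.filter_subset _ _) ?_ ?_ ?_
    · intro h
      exact hxt (Finset.mem_filter.1 (h.symm.subset ht)).2
    · exact Finset.two_lt_card.2 ⟨x, by simp [hx]; exact Relation.ReflTransGen.refl,
        y, by simp [hy, hRxy], w, by simp [hw, hxw], hxy, hwx.symm, hwy.symm⟩
    · intro u hu huH y hy z hz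
      have hxu : ¬ Reach c S i x u := fun h => huH (Finset.mem_filter.2 ⟨hu, h⟩)
      rw [(Finset.mem_filter.1 hy).2.const hs hg hu hxu,
        (Finset.mem_filter.1 hz).2.const hs hg hu hxu]
  exact ⟨(hRxy.const hs hg hw hxw).symm,
    fun h => hxw (Relation.ReflTransGen.single ⟨hx, hw, by rw [hs, h]⟩)⟩

/-- A connected `P₄`-free colour on at least four vertices contains a spanning star. -/
theorem exists_star {c : V → V → K} (hs : ∀ x y, c x y = c y x)
    {S : Finset V} (hS : 4 ≤ S.card) {i : K} (hi : Conn c S i) (h4 : ¬ HasP4 c S i) :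
    ∃ a ∈ S, ∀ x ∈ S, x ≠ a → c a x = i := by
  classical
  -- two edges with a common end `a`
  obtain ⟨p, hp, -⟩ := exists_fresh S [] (by rw [List.length_nil]; omega)
  have hne : ∀ l : List V, l.length < 4 → l.toFinset ≠ S := by
    rintro l hl rfl
    have := l.toFinset_card_le
    omega
  obtain ⟨p', hp', q, hq, hpq, e1⟩ := hi [p].toFinset (by simpa using hp) (by simp)
    (hne _ (by simp))
  obtain ⟨u, hu, v, hv, huv, e2⟩ := hi [p', q].toFinset (by
    intro x hx
    simp only [List.toFinset_cons, List.toFinset_nil, Finset.mem_insert, insert_empty_eq,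
      Finset.mem_singleton] at hx hp'
    rcases hx with rfl | rfl
    · exact hp' ▸ hp
    · exact hq) (by simp) (hne _ (by simp))
  obtain ⟨a, ha, y, hy, z, hz, hay, haz, hyz, e3, e4⟩ : ∃ a ∈ S, ∃ y ∈ S, ∃ z ∈ S, a ≠ y ∧ a ≠ z ∧
      y ≠ z ∧ c a y = i ∧ c a z = i := by
    simp only [List.toFinset_cons, List.toFinset_nil, Finset.mem_insert, insert_empty_eq,
      Finset.mem_singleton, not_or] at hp' hpq hu huv
    subst hp'
    rcases hu with rfl | rfl
    · exact ⟨u, hp, q, hq, v, hv, by tauto, by tauto, by tauto, e1, e2⟩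
    · exact ⟨u, hq, p', hp, v, hv, by tauto, by tauto, by tauto, by rw [hs, e1], e2⟩
  refine ⟨a, ha, ?_⟩
  by_contra! hc
  obtain ⟨x, hx, hxa, hxi⟩ := hc
  obtain ⟨u, hu, v, hv, huv, e5⟩ := hi (S.filter fun t => t = a ∨ c a t = i)
    (Finset.filter_subset _ _) ⟨a, by simp [ha]⟩ (fun h => by
      have := (Finset.mem_filter.1 (h.symm.subset hx)).2
      tauto)
  simp only [Finset.mem_filter, not_and, not_or] at hu huv
  have hv' := huv hv
  have hua : u ≠ a := by rintro rfl; exact hv'.2 e5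
  have e6 : c a u = i := hu.2.resolve_left hua
  obtain ⟨t, ht, hta, htu, e7⟩ : ∃ t ∈ S, t ≠ a ∧ t ≠ u ∧ c a t = i := by
    by_cases h : u = y
    · exact ⟨z, hz, haz.symm, by grind, e4⟩
    · exact ⟨y, hy, hay.symm, by grind, e3⟩
  exact h4 ⟨t, a, u, v, by simp; grind, by simp; grind, by rw [hs, e7], e6, e5⟩

/-- The weighted form of the upper bound. -/
theorem not_avoids [Fintype K] {c : V → V → K} (hs : ∀ x y, c x y = c y x) (hg : NoRainbow c)
    (S : Finset V) : ∀ w, ¬ Avoids c S w := by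
  classical
  induction S using Finset.strongInduction with
  | H S ih =>
  intro w hA
  have hom : ∀ H ⊆ S, H ≠ S → 3 ≤ H.card →
      ¬ ∀ x ∈ S, x ∉ H → ∀ y ∈ H, ∀ z ∈ H, c x y = c x z := by
    intro H hHS hne hH hh
    obtain ⟨w', h'⟩ := hA.of_homogeneous hs hHS hH hh
    exact ih H (hHS.ssubset_of_ne hne) w' h'
  obtain ⟨hw2, h0, h1, h2, hcard⟩ := hA
  have twins : ∀ i, ¬ Conn c S i → ∀ x ∈ S, ∀ y ∈ S, x ≠ y → c x y = i → ∀ w ∈ S, w ≠ x → w ≠ y →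
      c w x = c w y ∧ c w x ≠ i := fun i hi x hx y hy hxy h w hw hwx hwy =>
    twins_of_not_conn hs hg hom hi hx hy hxy h hw hwx hwy
  -- an edge `xy` of a disconnected colour is isolated among all edges of disconnected colours
  have hO : ∀ x ∈ S, ∀ y ∈ S, x ≠ y → ¬ Conn c S (c x y) → ∀ w ∈ S, w ≠ x → w ≠ y →
      c w x = c w y ∧ Conn c S (c w x) := by
    intro x hx y hy hxy hn w hw hwx hwy
    have e := twins _ hn x hx y hy hxy rfl w hw hwx hwy
    refine ⟨e.1, ?_⟩
    by_contra hn'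
    refine (twins _ hn' w hw x hx hwx rfl y hy hwy.symm hxy.symm).2 ?_
    rw [hs y w, e.1]
  have hconn : ∀ i, Conn c S i → w i = 2 := by
    intro i hi
    have := hw2 i
    interval_cases hwi : w i
    · exfalso
      obtain ⟨p, hp, -⟩ := exists_fresh S [] (by rw [List.length_nil]; omega)
      obtain ⟨p', hp', q, hq, hpq, e⟩ := hi {p} (by simpa using hp) (by simp)
        (by rintro rfl; simp at hcard)
      simp only [Finset.mem_singleton] at hp' hpq
      exact h0 i hwi p' (hp' ▸ hp) q hq (by grind) e
    · exfalso
      obtain ⟨a, ha, hall⟩ := exists_star hs (by omega) hi (h1 i hwi)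
      have := Finset.card_erase_of_mem ha
      refine hom (S.erase a) (Finset.erase_subset _ _) (Finset.erase_ssubset ha).ne (by omega) ?_
      intro x hx hxa y hy z hz
      have hxa' : x = a := by by_contra h; exact hxa (Finset.mem_erase.2 ⟨h, hx⟩)
      rw [hxa', hall y (Finset.mem_of_mem_erase hy) (Finset.ne_of_mem_erase hy),
        hall z (Finset.mem_of_mem_erase hz) (Finset.ne_of_mem_erase hz)]
    · rfl
  obtain ⟨x, hx, y, hy, z, hz, hxy, hxz, hyz⟩ := Finset.two_lt_card.1 (show 2 < S.card by omega)
  obtain ⟨r, hr⟩ : ∃ r, Conn c S r := by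
    by_contra! hnone
    exact hnone _ (hO x hx y hy hxy (hnone _) z hz hxz.symm hyz.symm).2
  have hr2 := hconn r hr
  by_cases hb : ∃ b, b ≠ r ∧ Conn c S b
  · obtain ⟨b, hbr, hb⟩ := hb
    have hb2 := hconn b hb
    have only : ∀ i, Conn c S i → i = r ∨ i = b := by
      intro i hi
      by_contra! hne
      exact conn_three hs hg hbr.symm hne.1.symm hne.2.symm S (by omega) hr hb hi
    have hsum2 : w r + w b ≤ ∑ i, w i := by
      rw [← Finset.sum_pair hbr.symm]
      exact Finset.sum_le_sum_of_subset (Finset.subset_univ _)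
    by_cases hall : ∀ x ∈ S, ∀ y ∈ S, x ≠ y → c x y = r ∨ c x y = b
    · exact false_of_two_colors hs (by omega) hall (h2 r hr2) (h2 b hb2)
    · push Not at hall
      obtain ⟨u, hu, v, hv, huv, hnr, hnb⟩ := hall
      have hw0 : w (c u v) ≠ 0 := fun h => h0 _ h u hu v hv huv rfl
      have hsum3 : w r + (w b + w (c u v)) ≤ ∑ i, w i := by
        have : ∑ i ∈ {r, b, c u v}, w i = w r + (w b + w (c u v)) := by
          rw [Finset.sum_insert (by simp [hbr.symm, hnr.symm]), Finset.sum_pair hnb.symm]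
        rw [← this]
        exact Finset.sum_le_sum_of_subset (Finset.subset_univ _)
      have hO' : ∀ x ∈ S, ∀ y ∈ S, x ≠ y → c x y ≠ r → c x y ≠ b →
          ∀ w ∈ S, w ≠ x → w ≠ y → c w x = c w y ∧ (c w x = r ∨ c w x = b) := by
        intro x hx y hy hxy hnr hnb w hw hwx hwy
        have e := hO x hx y hy hxy (fun h => (only _ h).elim hnr hnb) w hw hwx hwy
        exact ⟨e.1, only _ e.2⟩
      refine false_of_twins hs hbr.symm (by omega) (fun x hx y hy hxy => ?_) (h2 r hr2) (h2 b hb2)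
        hu hv huv (hO' u hu v hv huv hnr hnb)
      by_cases k1 : c x y = r
      · exact Or.inl k1
      by_cases k2 : c x y = b
      · exact Or.inr (Or.inl k2)
      exact Or.inr (Or.inr (hO' x hx y hy hxy k1 k2))
  · have only : ∀ i, Conn c S i → i = r := fun i hi => by_contra fun h => hb ⟨i, h, hi⟩
    have hsum1 : w r ≤ ∑ i, w i := Finset.single_le_sum (fun _ _ => Nat.zero_le _)
      (Finset.mem_univ r)
    refine h2 r hr2 (p6_of_almost_complete hs (by omega) fun x hx y hy z hz hxy hxz hyz => ?_)
    by_cases k : c x y = r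
    · exact Or.inl k
    · right
      rw [hs]
      exact only _ (hO x hx y hy hxy (fun h => k (only _ h)) z hz hxz.symm hyz.symm).2

/-! ### The lower bound -/

/-- The extremal colouring: the edge `xy` gets colour `(max x y - 3) / 2`, with truncated subtraction.
The outer `min` only serves to land in `Fin k` and is inactive for `N ≤ 2 * k + 3`. -/
def lowerColoring (N k : ℕ) (hk : 1 ≤ k) (e : Sym2 (Fin N)) : Fin k :=
  ⟨min ((e.sup.val - 3) / 2) (k - 1), by omega⟩

theorem lowerColoring_val {N k : ℕ} (hk : 1 ≤ k) (hN : N ≤ 2 * k + 3) (x y : Fin N) :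
    (lowerColoring N k hk s(x, y)).val = (max x.val y.val - 3) / 2 := by
  have : (s(x, y) : Sym2 (Fin N)).sup.val = max x.val y.val := by
    rw [Sym2.sup_mk]
    rcases le_total x y with h | h
    · rw [sup_eq_right.2 h, max_eq_right (show x.val ≤ y.val from h)]
    · rw [sup_eq_left.2 h, max_eq_left (show y.val ≤ x.val from h)]
  simp only [lowerColoring, this]
  have := x.2
  have := y.2
  omega

/-- Only the first, third and fifth edges of the path are needed: they are disjoint and cover all six
vertices. -/
theorem no_p6_nat (i : ℕ) (a b d e f g : ℕ) (hn : [a, b, d, e, f, g].Nodup)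
    (h1 : (max a b - 3) / 2 = i) (h2 : (max d e - 3) / 2 = i) (h3 : (max f g - 3) / 2 = i) :
    False := by
  rcases Nat.eq_zero_or_pos i with rfl | hi
  · have small : ∀ p q : ℕ, (max p q - 3) / 2 = 0 → p < 5 ∧ q < 5 := by omega
    have k1 := small a b h1
    have k2 := small d e h2
    have k3 := small f g h3
    have hsub : [a, b, d, e, f, g].toFinset ⊆ Finset.range 5 := by
      intro x hx
      simp only [List.mem_toFinset, List.mem_cons, List.not_mem_nil, or_false] at hx
      rw [Finset.mem_range]
      rcases hx with rfl | rfl | rfl | rfl | rfl | rfl <;> tauto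
    have hc := Finset.card_le_card hsub
    rw [List.toFinset_card_of_nodup hn, Finset.card_range] at hc
    simp at hc
  · have big : ∀ p q : ℕ, (max p q - 3) / 2 = i →
        ∃ m, (m = p ∨ m = q) ∧ (m = 2 * i + 3 ∨ m = 2 * i + 4) :=
      fun p q h => ⟨max p q, by omega, by omega⟩
    obtain ⟨m₁, e1, k1⟩ := big a b h1
    obtain ⟨m₂, e2, k2⟩ := big d e h2
    obtain ⟨m₃, e3, k3⟩ := big f g h3
    simp only [List.mem_cons, List.not_mem_nil, or_false, not_or, List.nodup_cons, List.nodup_nil,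
      and_true, not_false_eq_true] at hn
    have n12 : m₁ ≠ m₂ := by rcases e1 with rfl | rfl <;> rcases e2 with rfl | rfl <;> tauto
    have n13 : m₁ ≠ m₃ := by rcases e1 with rfl | rfl <;> rcases e3 with rfl | rfl <;> tauto
    have n23 : m₂ ≠ m₃ := by rcases e2 with rfl | rfl <;> rcases e3 with rfl | rfl <;> tauto
    clear hn e1 e2 e3 h1 h2 h3
    omega

end GallaiP6

/-- GR_k(P₆) = 2k + 4. -/
theorem stmt_7 (k : ℕ) (hk : 1 ≤ k) :
    IsLeast {N | 0 < N ∧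
      GallaiRamseyProp (fun _ : Fin k => (⟨6, SimpleGraph.pathGraph 6⟩ : Σ V : ℕ, SimpleGraph (Fin V))) N} (2 * k + 4) := by
  refine ⟨⟨by omega, fun c hc => ?_⟩, fun N hN => ?_⟩
  · by_contra! hno
    have hs : ∀ x y, c s(x, y) = c s(y, x) := fun x y => by rw [Sym2.eq_swap]
    refine GallaiP6.not_avoids (c := fun x y => c s(x, y)) hs hc Finset.univ (fun _ => 2)
      ⟨fun _ => le_rfl, by simp, by simp, fun i _ hP => hno i ?_, by simp; omega⟩
    obtain ⟨a, b, d, e, f, g, hn, -, h1, h2, h3, h4, h5⟩ := hP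
    refine ⟨[a, b, d, e, f, g].get, List.nodup_iff_injective_get.1 hn, fun u v huv => ?_⟩
    rw [SimpleGraph.pathGraph_adj] at huv
    fin_cases u <;> fin_cases v <;> simp at huv ⊢ <;>
      first
        | assumption
        | (rw [hs]; assumption)
  · by_contra! hlt
    have hval := fun x y => GallaiP6.lowerColoring_val (N := N) hk (by omega) x y
    obtain ⟨i, f, hf, hadj⟩ := hN.2 (GallaiP6.lowerColoring N k hk) (by
      intro x y z _ _ _
      simp only [Fin.ext_iff, hval]
      omega)
    have hedge : ∀ u v : Fin 6, u.val + 1 = v.val →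
        (max (f u).val (f v).val - 3) / 2 = i.val := fun u v huv => by
      rw [← hval, hadj u v (by rw [SimpleGraph.pathGraph_adj]; exact Or.inl huv)]
    have hinj : Function.Injective fun u => (f u).val := fun u v h => hf (Fin.ext h)
    refine GallaiP6.no_p6_nat i.val _ _ _ _ _ _ ?_ (hedge 0 1 rfl) (hedge 2 3 rfl)
      (hedge 4 5 rfl)
    exact List.Nodup.map (l := ([0, 1, 2, 3, 4, 5] : List (Fin 6))) hinj (by decide)
end
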